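/- arXiv:1611.07199 — 2 statements merged into one kernel-verified Lean document; each statement's English description precedes it below -/
import Mathlib

section
/- Let (Ω,Σ,μ) be a probability space, X a Banach space, W ⊆ X a weakly compact set, and L(W) = {f ∈ L¹(μ,X) : f(ω) ∈ W for μ-a.e. ω}. Then L(W) is a δS-set; in particular, L(W) is relatively weakly compact in L¹(μ,X). -/
open MeasureTheory Filter Set ENNReal Pointwise

noncomputable section

def IsWeaklyCompact {X : Type*} [NormedAddCommGroup X] [NormedSpace ℝ X] (W : Set X) : Prop :=
  IsCompact (toWeakSpace ℝ X '' W)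

def IsRelWeaklyCompact {X : Type*} [NormedAddCommGroup X] [NormedSpace ℝ X] (W : Set X) : Prop :=
  IsCompact (closure (toWeakSpace ℝ X '' W))

variable {Ω : Type*} [MeasurableSpace Ω] {X : Type*} [NormedAddCommGroup X] [NormedSpace ℝ X]

/-- A set of functions in `L¹(μ,X)` is uniformly integrable if it is bounded and the integrals
of the norms over small sets are uniformly small. -/
def UnifIntegrableSet (μ : Measure Ω) (K : Set (Lp X 1 μ)) : Prop :=
  (∃ C : ℝ, ∀ f ∈ K, ‖f‖ ≤ C) ∧
  ∀ ε : ℝ, 0 < ε → ∃ δ : ℝ, 0 < δ ∧ ∀ f ∈ K, ∀ A : Set Ω, μ A ≤ ENNReal.ofReal δ →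
    ∫ ω in A, ‖(f : Ω → X) ω‖ ∂μ ≤ ε

/-- `K ⊆ L¹(μ,X)` is a δS-set if it is uniformly integrable and for every `δ > 0` there is a
weakly compact `W ⊆ X` with `μ (f ⁻¹' W) ≥ 1 - δ` for all `f ∈ K`. -/
def IsDeltaSSet (μ : Measure Ω) (K : Set (Lp X 1 μ)) : Prop :=
  UnifIntegrableSet μ K ∧
  ∀ δ : ℝ, 0 < δ → ∃ W : Set X, IsWeaklyCompact W ∧
    ∀ f ∈ K, 1 - ENNReal.ofReal δ ≤ μ ((f : Ω → X) ⁻¹' W)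

/-- A Banach space `X` has property (δSμ) if every relatively weakly compact subset of
`L¹(μ,X)` is a δS-set. -/
def DeltaSProp (μ : Measure Ω) (X : Type*) [NormedAddCommGroup X] [NormedSpace ℝ X] : Prop :=
  ∀ K : Set (Lp X 1 μ), IsRelWeaklyCompact K → IsDeltaSSet μ K

/-- If `ξ` is at distance more than `r` from the span of finitely many functionals, then some vector
of norm at most one in their common kernel satisfies `r < ξ φ`. -/
theorem exists_norm_le_one_and_lt_apply_of_lt_norm_sub {E ι : Type*} [NormedAddCommGroup E]
    [NormedSpace ℝ E] [Finite ι] (L : ι → StrongDual ℝ E) (ξ : StrongDual ℝ E) {r : ℝ}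
    (hξ : ∀ x ∈ Submodule.span ℝ (range L), r < ‖ξ - x‖) :
    ∃ φ : E, ‖φ‖ ≤ 1 ∧ (∀ i, L i φ = 0) ∧ r < ξ φ := by
  let N : Submodule ℝ E := ⨅ i, LinearMap.ker (L i).toLinearMap
  obtain ⟨g, hgN, hg⟩ := exists_extension_norm_eq N (ξ.comp N.subtypeL)
  have hmem : (ξ - g).toLinearMap ∈ Submodule.span ℝ (range fun i => (L i).toLinearMap) := by
    refine mem_span_of_iInf_ker_le_ker fun φ hφ => ?_
    have : g φ = ξ φ := hgN ⟨φ, hφ⟩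
    simp [this]
  have hspan : Submodule.span ℝ (range fun i => (L i).toLinearMap) =
      (Submodule.span ℝ (range L)).map (ContinuousLinearMap.coeLM ℝ) := by
    rw [Submodule.map_span, ← range_comp]
    rfl
  rw [hspan] at hmem
  obtain ⟨x, hx, hxg⟩ := hmem
  have hnorm : r < ‖ξ.comp N.subtypeL‖ := by
    have h1 : ξ - x = g := by
      ext φ
      have : x φ = ξ φ - g φ := congrArg (fun l => l φ) hxg
      simp [this]
    rw [← hg, ← h1]
    exact hξ x hx
  obtain ⟨φ, hφ1, hφ⟩ := ContinuousLinearMap.exists_lt_apply_of_lt_opNorm _ hnorm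
  have hker : ∀ i, L i φ = 0 := fun i => (Submodule.mem_iInf _).1 φ.2 i
  rw [Real.norm_eq_abs] at hφ
  rcases lt_abs.1 hφ with h | h
  · exact ⟨φ, hφ1.le, hker, h⟩
  · exact ⟨-φ, by simpa using hφ1.le, fun i => by simp [hker i], by simpa using h⟩

/-- A bounded set that is not relatively weakly compact violates the double limit condition. -/
theorem exists_seq_of_not_isRelWeaklyCompact {Z : Type*} [NormedAddCommGroup Z] [NormedSpace ℝ Z]
    [CompleteSpace Z] {K : Set Z} (hb : Bornology.IsBounded K) (hK : ¬ IsRelWeaklyCompact K) :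
    ∃ c : ℝ, 0 < c ∧ ∃ (φ : ℕ → StrongDual ℝ Z) (z : ℕ → Z), (∀ n, ‖φ n‖ ≤ 1) ∧ (∀ n, z n ∈ K) ∧
      (∀ m n, m ≤ n → c < φ m (z n)) ∧ ∀ m n, n < m → φ m (z n) = 0 := by
  let J := NormedSpace.inclusionInDoubleDual ℝ Z
  let Jw := NormedSpace.inclusionInDoubleDualWeak ℝ Z
  have hnot : ¬ closure (Jw '' (toWeakSpace ℝ Z '' K)) ⊆ range Jw := fun h =>
    hK (NormedSpace.isCompact_closure_of_isBounded ℝ Z _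
      (by rwa [preimage_image_eq _ (toWeakSpace ℝ Z).injective]) h)
  obtain ⟨ξ', hξcl, hξr⟩ := not_subset.1 hnot
  let ξ : StrongDual ℝ (StrongDual ℝ Z) := WeakDual.toStrongDual ξ'
  have hJ : Isometry J := (NormedSpace.inclusionInDoubleDualLi ℝ (E := Z)).isometry
  have hclosed : IsClosed (range J) := hJ.isClosedEmbedding.isClosed_range
  have hξJ : ξ ∉ range J := by
    rintro ⟨z, hz⟩
    exact hξr ⟨toWeakSpace ℝ Z z, by
      apply (WeakDual.toStrongDual (𝕜 := ℝ) (E := StrongDual ℝ Z)).injective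
      exact hz⟩
  obtain ⟨d, hd, hball⟩ := Metric.isOpen_iff.1 hclosed.isOpen_compl ξ hξJ
  have hdist : ∀ z, d ≤ ‖ξ - J z‖ := fun z => by
    by_contra! h
    exact hball (by rwa [Metric.mem_ball, dist_comm, dist_eq_norm ξ]) ⟨z, rfl⟩
  obtain ⟨f, hfP, hfr⟩ := exists_seq_of_forall_finset_exists
    (fun p : StrongDual ℝ Z × Z => ‖p.1‖ ≤ 1 ∧ p.2 ∈ K ∧ d / 2 < ξ p.1 ∧ d / 2 < p.1 p.2)
    (fun p q => q.1 p.2 = 0 ∧ d / 2 < p.1 q.2) (by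
      classical
      intro s hs
      obtain ⟨φ, hφ1, hφ0, hφ⟩ :=
        exists_norm_le_one_and_lt_apply_of_lt_norm_sub
          (fun z : s.image Prod.snd => J z) ξ (r := d / 2) fun x hx => by
            have hle : Submodule.span ℝ (range fun z : s.image Prod.snd => J z) ≤
                LinearMap.range J.toLinearMap := by
              rw [Submodule.span_le]
              rintro _ ⟨z, rfl⟩
              exact ⟨z, rfl⟩
            obtain ⟨z, rfl⟩ := hle hx
            exact (half_lt_self hd).trans_le (hdist z)
      let U : Set (WeakDual ℝ (StrongDual ℝ Z)) :=
        ⋂ ψ ∈ insert φ (s.image Prod.fst), {η | d / 2 < η ψ}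
      have hU : IsOpen U := isOpen_biInter_finset fun ψ _ =>
        isOpen_lt continuous_const (WeakDual.eval_continuous ψ)
      have hξU : ξ' ∈ U := by
        refine mem_iInter₂.2 fun ψ hψ => ?_
        rcases Finset.mem_insert.1 hψ with rfl | hψ
        · exact hφ
        · obtain ⟨p, hp, rfl⟩ := Finset.mem_image.1 hψ
          exact (hs p hp).2.2.1
      obtain ⟨_, hηU, _, ⟨z, hz, rfl⟩, rfl⟩ := mem_closure_iff.1 hξcl U hU hξU
      have hval : ∀ ψ ∈ insert φ (s.image Prod.fst), d / 2 < ψ z := fun ψ hψ =>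
        mem_iInter₂.1 hηU ψ hψ
      exact ⟨(φ, z), ⟨hφ1, hz, hφ, hval φ (Finset.mem_insert_self _ _)⟩, fun p hp =>
        ⟨hφ0 ⟨p.2, Finset.mem_image_of_mem _ hp⟩,
          hval _ (Finset.mem_insert_of_mem (Finset.mem_image_of_mem _ hp))⟩⟩)
  refine ⟨d / 2, by positivity, fun n => (f n).1, fun n => (f n).2, fun n => (hfP n).1,
    fun n => (hfP n).2.1, fun m n hmn => ?_, fun m n hmn => (hfr n m hmn).1⟩
  rcases hmn.eq_or_lt with rfl | h
  · exact (hfP _).2.2.2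
  · exact (hfr m n h).2

theorem IsWeaklyCompact.exists_norm_le {W : Set X} (hW : IsWeaklyCompact W) :
    ∃ R : ℝ, 0 ≤ R ∧ ∀ x ∈ W, ‖x‖ ≤ R := by
  obtain ⟨C, hC⟩ := banach_steinhaus (g := fun x : W => NormedSpace.inclusionInDoubleDual ℝ X x)
    (fun φ => by
      have hc : Continuous fun x : WeakSpace ℝ X => φ ((toWeakSpace ℝ X).symm x) :=
        WeakBilin.eval_continuous (topDualPairing ℝ X).flip φ
      obtain ⟨C, hC⟩ := (hW.image hc).isBounded.exists_norm_le
      exact ⟨C, fun x => hC _ ⟨_, mem_image_of_mem _ x.2, by simp⟩⟩)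
  refine ⟨max C 0, le_max_right _ _, fun x hx => ?_⟩
  calc ‖x‖ = ‖NormedSpace.inclusionInDoubleDual ℝ X x‖ :=
        ((NormedSpace.inclusionInDoubleDualLi ℝ).norm_map x).symm
    _ ≤ C := hC ⟨x, hx⟩
    _ ≤ _ := le_max_left _ _

theorem norm_le_of_ae_norm_le {E : Type*} [NormedAddCommGroup E] (μ : Measure Ω)
    [IsProbabilityMeasure μ] {f : Lp E 1 μ} {R : ℝ} (hf : ∀ᵐ ω ∂μ, ‖f ω‖ ≤ R) : ‖f‖ ≤ R := by
  rw [L1.norm_eq_integral_norm]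
  calc ∫ ω, ‖f ω‖ ∂μ ≤ ∫ _, R ∂μ :=
        integral_mono_ae (L1.integrable_coeFn f).norm (integrable_const _) hf
    _ = R := by simp

theorem isDeltaSSet_of_isWeaklyCompact (μ : Measure Ω) [IsProbabilityMeasure μ] {W : Set X}
    (hW : IsWeaklyCompact W) :
    IsDeltaSSet μ {f : Lp X 1 μ | ∀ᵐ ω ∂μ, (f : Ω → X) ω ∈ W} := by
  obtain ⟨R, hR0, hR⟩ := hW.exists_norm_le
  refine ⟨⟨⟨R, fun f (hf : ∀ᵐ ω ∂μ, f ω ∈ W) =>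
      norm_le_of_ae_norm_le μ (hf.mono fun ω hω => hR _ hω)⟩,
    fun ε hε => ⟨ε / (R + 1), by positivity, fun f (hf : ∀ᵐ ω ∂μ, f ω ∈ W) A hA => ?_⟩⟩,
    fun δ hδ => ⟨W, hW, fun f hf => ?_⟩⟩
  · calc ∫ ω in A, ‖f ω‖ ∂μ ≤ ∫ _ in A, R ∂μ :=
          integral_mono_ae (L1.integrable_coeFn f).norm.integrableOn (integrable_const _)
            (ae_restrict_of_ae (hf.mono fun ω hω => hR _ hω))
      _ = μ.real A * R := by simp
      _ ≤ ε / (R + 1) * (R + 1) := by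
          gcongr
          · exact ENNReal.toReal_le_of_le_ofReal (by positivity) hA
          · linarith
      _ = ε := by field_simp
  · have h0 : μ ((f : Ω → X) ⁻¹' W)ᶜ = 0 := hf
    have h1 : (1 : ℝ≥0∞) ≤ μ ((f : Ω → X) ⁻¹' W) := by
      calc (1 : ℝ≥0∞) = μ (((f : Ω → X) ⁻¹' W) ∪ ((f : Ω → X) ⁻¹' W)ᶜ) := by simp
        _ ≤ μ ((f : Ω → X) ⁻¹' W) + μ ((f : Ω → X) ⁻¹' W)ᶜ := measure_union_le _ _
        _ = _ := by rw [h0, add_zero]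
    exact tsub_le_self.trans h1

/-- **Helly's theorem** for functionals, with rational test coefficients. -/
theorem exists_strongDual_apply_eq {Y ι : Type*} [NormedAddCommGroup Y] [NormedSpace ℝ Y]
    (d : ι → Y) (a : ι → ℝ) {C : ℝ} (hC : 0 ≤ C)
    (h : ∀ (s : Finset ι) (q : s → ℚ), |∑ i, (q i : ℝ) * a i| ≤ C * ‖∑ i, (q i : ℝ) • d i‖) :
    ∃ g : StrongDual ℝ Y, ‖g‖ ≤ C ∧ ∀ i, g (d i) = a i := by
  let L := Finsupp.linearCombination ℝ d
  let ψ := Finsupp.linearCombination ℝ a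
  have hbound : ∀ r : ι →₀ ℝ, |ψ r| ≤ C * ‖L r‖ := fun r => by
    have hall : ∀ t : r.support → ℝ, |∑ i, t i * a i| ≤ C * ‖∑ i, t i • d i‖ := by
      intro t
      have hd : DenseRange (Pi.map fun (_ : r.support) (q : ℚ) => (q : ℝ)) :=
        DenseRange.piMap fun _ => Rat.denseRange_cast
      refine hd.induction_on (p := fun t => |∑ i, t i * a i| ≤ C * ‖∑ i, t i • d i‖) t
        (isClosed_le (by fun_prop) (by fun_prop)) fun q => h _ q
    have := hall fun i => r i
    rw [Finset.sum_coe_sort r.support fun i => r i * a i,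
      Finset.sum_coe_sort r.support fun i => r i • d i] at this
    simpa [ψ, L, Finsupp.linearCombination_apply, Finsupp.sum] using this
  have hker : ψ ∈ LinearMap.range L.dualMap := by
    rw [LinearMap.range_dualMap_eq_dualAnnihilator_ker, Submodule.mem_dualAnnihilator]
    intro r hr
    have := hbound r
    rw [LinearMap.mem_ker.1 hr, norm_zero, mul_zero] at this
    exact abs_nonpos_iff.1 this
  obtain ⟨ψ', hψ'⟩ := hker
  let η : StrongDual ℝ (LinearMap.range L) :=
    (ψ'.domRestrict (LinearMap.range L)).mkContinuous C (by
      rintro ⟨_, r, rfl⟩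
      have : ψ' (L r) = ψ r := congrArg (fun l => l r) hψ'
      simpa [this] using hbound r)
  obtain ⟨g, hg, hgn⟩ := exists_extension_norm_eq (LinearMap.range L) η
  refine ⟨g, hgn.trans_le (LinearMap.mkContinuous_norm_le _ hC _), fun i => ?_⟩
  have hmem : d i ∈ LinearMap.range L := ⟨Finsupp.single i 1, by simp [L]⟩
  have h1 : ψ' (L (Finsupp.single i 1)) = ψ (Finsupp.single i 1) :=
    congrArg (fun l => l (Finsupp.single i 1)) hψ'
  calc g (d i) = ψ' (d i) := hg ⟨d i, hmem⟩
    _ = a i := by simpa [L, ψ] using h1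

section Representation

variable {Y : Type*} [NormedAddCommGroup Y] [NormedSpace ℝ Y]

variable (Y) in
/-- `indicatorConstLp 1` as a continuous linear map in the constant. -/
def indicatorConstL1 {μ : Measure Ω} {A : Set Ω} (hA : MeasurableSet A) (hμA : μ A ≠ ∞) :
    Y →L[ℝ] Lp Y 1 μ :=
  LinearMap.mkContinuous
    { toFun := indicatorConstLp 1 hA hμA
      map_add' := fun _ _ => indicatorConstLp_add.symm
      map_smul' := fun r y => by
        refine Lp.ext ?_
        filter_upwards [indicatorConstLp_coeFn (p := 1) (hs := hA) (hμs := hμA) (c := r • y),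
          indicatorConstLp_coeFn (p := 1) (hs := hA) (hμs := hμA) (c := y),
          Lp.coeFn_smul r (indicatorConstLp 1 hA hμA y)] with ω h1 h2 h3
        rw [RingHom.id_apply, h1, h3, Pi.smul_apply, h2]
        by_cases hω : ω ∈ A <;> simp [hω] } (μ.real A) fun y => by
    change ‖indicatorConstLp 1 hA hμA y‖ ≤ _
    rw [norm_indicatorConstLp one_ne_zero ENNReal.one_ne_top]
    simp [mul_comm]

/-- A functional on `L¹(μ, Y)` restricted to the multiples of `y` has a scalar density. -/
theorem exists_density_of_strongDual_L1 (μ : Measure Ω) [IsProbabilityMeasure μ]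
    (φ : StrongDual ℝ (Lp Y 1 μ)) (y : Y) :
    ∃ h : Ω → ℝ, Measurable h ∧ Integrable h μ ∧ ∀ (A : Set Ω) (hA : MeasurableSet A),
      ∫ ω in A, h ω ∂μ = φ (indicatorConstLp 1 hA (measure_ne_top μ A) y) := by
  let T : StrongDual ℝ (Lp ℝ 2 μ) :=
    φ ∘L ((ContinuousLinearMap.lsmul ℝ ℝ (E := Y)).holderL μ 2 2 1).flip (Lp.const 2 μ y)
  let H : Lp ℝ 2 μ := (InnerProductSpace.toDual ℝ _).symm T
  refine ⟨H, (Lp.stronglyMeasurable H).measurable, (Lp.memLp H).integrable one_le_two,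
    fun A hA => ?_⟩
  have h1 : inner ℝ H (indicatorConstLp 2 hA (measure_ne_top μ A) (1 : ℝ)) =
      T (indicatorConstLp 2 hA (measure_ne_top μ A) (1 : ℝ)) :=
    InnerProductSpace.toDual_symm_apply
  rw [real_inner_comm, L2.inner_indicatorConstLp_one] at h1
  rw [h1]
  change φ _ = φ _
  congr 1
  refine Lp.ext ?_
  refine (ContinuousLinearMap.coeFn_holder _ _ _).trans ?_
  filter_upwards [indicatorConstLp_coeFn (p := 2) (hs := hA) (hμs := measure_ne_top μ A)
    (c := (1 : ℝ)), indicatorConstLp_coeFn (p := 1) (hs := hA) (hμs := measure_ne_top μ A)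
    (c := y), Lp.coeFn_const 2 μ y] with ω h1 h2 h3
  rw [h1, h2, h3]
  by_cases hω : ω ∈ A <;> simp [hω]

theorem measurable_apply_apply [SecondCountableTopology Y] [MeasurableSpace Y] [BorelSpace Y]
    {g : Ω → StrongDual ℝ Y} (hg : ∀ y, Measurable fun ω => g ω y) {f : Ω → Y}
    (hf : Measurable f) : Measurable fun ω => g ω (f ω) :=
  (stronglyMeasurable_uncurry_of_continuous_of_stronglyMeasurable (u := fun y ω => g ω y)
    (fun ω => (g ω).continuous) fun y => (hg y).stronglyMeasurable).measurable.comp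
    (hf.prodMk measurable_id)

theorem integrable_apply_apply (μ : Measure Ω) [SecondCountableTopology Y]
    {g : Ω → StrongDual ℝ Y} (hg : ∀ y, Measurable fun ω => g ω y) {C : ℝ} (hC : ∀ ω, ‖g ω‖ ≤ C)
    (f : Lp Y 1 μ) : Integrable (fun ω => g ω (f ω)) μ := by
  borelize Y
  refine ((L1.integrable_coeFn f).norm.const_mul C).mono'
    (measurable_apply_apply hg (Lp.stronglyMeasurable f).measurable).aestronglyMeasurable
    (ae_of_all _ fun ω => (g ω).le_of_opNorm_le (hC ω) _)

/-- The functional on `L¹(μ, Y)` given by integration against a bounded scalarly measurable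
family of functionals. -/
def integralStrongDual (μ : Measure Ω) [SecondCountableTopology Y]
    (g : Ω → StrongDual ℝ Y) (hg : ∀ y, Measurable fun ω => g ω y) {C : ℝ}
    (hC : ∀ ω, ‖g ω‖ ≤ C) : StrongDual ℝ (Lp Y 1 μ) :=
  LinearMap.mkContinuous
    { toFun := fun f => ∫ ω, g ω (f ω) ∂μ
      map_add' := fun f₁ f₂ => by
        rw [← integral_add (integrable_apply_apply μ hg hC f₁) (integrable_apply_apply μ hg hC f₂)]
        refine integral_congr_ae ?_
        filter_upwards [Lp.coeFn_add f₁ f₂] with ω hω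
        rw [hω, Pi.add_apply, map_add]
      map_smul' := fun c f => by
        rw [RingHom.id_apply, smul_eq_mul, ← integral_const_mul]
        refine integral_congr_ae ?_
        filter_upwards [Lp.coeFn_smul c f] with ω hω
        rw [hω, Pi.smul_apply, map_smul, smul_eq_mul] } C fun f => by
    rw [L1.norm_eq_integral_norm, ← integral_const_mul]
    exact norm_integral_le_of_norm_le ((L1.integrable_coeFn f).norm.const_mul C)
      (ae_of_all _ fun ω => (g ω).le_of_opNorm_le (hC ω) _)

/-- Functionals on `L¹(μ, Y)`, `Y` separable, are given by bounded scalarly measurable families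
of functionals on `Y`. -/
theorem exists_representation_of_strongDual_L1 (μ : Measure Ω) [IsProbabilityMeasure μ]
    [SecondCountableTopology Y] (φ : StrongDual ℝ (Lp Y 1 μ)) (hφ : ‖φ‖ ≤ 1) :
    ∃ g : Ω → StrongDual ℝ Y, (∀ y, Measurable fun ω => g ω y) ∧ (∀ ω, ‖g ω‖ ≤ 1) ∧
      ∀ f : Lp Y 1 μ, φ f = ∫ ω, g ω (f ω) ∂μ := by
  classical
  let d := TopologicalSpace.denseSeq Y
  have hd : DenseRange d := TopologicalSpace.denseRange_denseSeq Y
  choose h hm hi hA using fun k => exists_density_of_strongDual_L1 μ φ (d k)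
  have hae : ∀ᵐ ω ∂μ, ∀ (s : Finset ℕ) (q : s → ℚ),
      |∑ i, (q i : ℝ) * h i ω| ≤ 1 * ‖∑ i, (q i : ℝ) • d i‖ := by
    refine ae_all_iff.2 fun s => ae_all_iff.2 fun q => ?_
    have hint : Integrable (fun ω => ∑ i, (q i : ℝ) * h i ω) μ :=
      integrable_finsetSum _ fun i _ => (hi i).const_mul _
    have hset : ∀ A, MeasurableSet A →
        |∫ ω in A, ∑ i, (q i : ℝ) * h i ω ∂μ| ≤ ‖∑ i, (q i : ℝ) • d i‖ * μ.real A := by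
      intro A hAm
      let I := indicatorConstL1 Y hAm (measure_ne_top μ A)
      have : ∫ ω in A, ∑ i, (q i : ℝ) * h i ω ∂μ = φ (I (∑ i, (q i : ℝ) • d i)) := by
        rw [integral_finsetSum Finset.univ fun (i : s) _ =>
          ((hi (i : ℕ)).const_mul (q i : ℝ)).integrableOn (s := A), map_sum, map_sum]
        refine Finset.sum_congr rfl fun i _ => ?_
        rw [integral_const_mul, hA i A hAm, map_smul, map_smul, smul_eq_mul]
        rfl
      rw [this, ← Real.norm_eq_abs]
      calc ‖φ (I (∑ i, (q i : ℝ) • d i))‖ ≤ 1 * ‖I (∑ i, (q i : ℝ) • d i)‖ :=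
            φ.le_of_opNorm_le hφ _
        _ = _ := by
            change 1 * ‖indicatorConstLp 1 hAm (measure_ne_top μ A) _‖ = _
            rw [one_mul, norm_indicatorConstLp one_ne_zero ENNReal.one_ne_top]
            simp
    have h1 := ae_le_of_forall_setIntegral_le hint
      (integrable_const ‖∑ i, (q i : ℝ) • d i‖) fun A hAm _ => by
        have := (abs_le.1 (hset A hAm)).2
        simpa [mul_comm] using this
    have h2 := ae_le_of_forall_setIntegral_le
      (integrable_const (-‖∑ i, (q i : ℝ) • d i‖)) hint fun A hAm _ => by
        have := (abs_le.1 (hset A hAm)).1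
        simpa [mul_comm] using this
    filter_upwards [h1, h2] with ω h1 h2
    rw [one_mul]
    exact abs_le.2 ⟨h2, h1⟩
  obtain ⟨G, hGsub, hGm, hG⟩ : ∃ G : Set Ω, (∀ ω ∈ G, ∀ (s : Finset ℕ) (q : s → ℚ),
      |∑ i, (q i : ℝ) * h i ω| ≤ 1 * ‖∑ i, (q i : ℝ) • d i‖) ∧ MeasurableSet G ∧
      ∀ᵐ ω ∂μ, ω ∈ G := by
    obtain ⟨N, hN, hNm, hN0⟩ := exists_measurable_superset_of_null (ae_iff.1 hae)
    refine ⟨Nᶜ, fun ω hω => ?_, hNm.compl, compl_mem_ae_iff.2 hN0⟩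
    by_contra hcon
    exact hω (hN hcon)
  choose! g hg1 hgd using fun ω (hω : ω ∈ G) =>
    exists_strongDual_apply_eq d (fun k => h k ω) zero_le_one (hGsub ω hω)
  let g' : Ω → StrongDual ℝ Y := fun ω => if ω ∈ G then g ω else 0
  have hg'1 : ∀ ω, ‖g' ω‖ ≤ 1 := fun ω => by
    by_cases hω : ω ∈ G
    · simpa [g', hω] using hg1 ω hω
    · simp [g', hω]
  have hg'm : ∀ y, Measurable fun ω => g' ω y := by
    intro y
    obtain ⟨u, hu, huy⟩ := mem_closure_iff_seq_limit.1 (hd y)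
    refine measurable_of_tendsto_metrizable (f := fun n ω => g' ω (u n)) (fun n => ?_)
      (tendsto_pi_nhds.2 fun ω => ((g' ω).continuous.tendsto y).comp huy)
    obtain ⟨k, hk⟩ := hu n
    have : (fun ω => g' ω (u n)) = G.indicator (h k) := by
      ext ω
      by_cases hω : ω ∈ G
      · simp [g', hω, ← hk, hgd ω hω]
      · simp [g', hω]
    rw [this]
    exact (hm k).indicator hGm
  refine ⟨g', hg'm, hg'1, fun f => ?_⟩
  let Ψ := integralStrongDual μ g' hg'm hg'1
  suffices ∀ f, φ f = Ψ f from this f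
  intro f
  induction f using Lp.induction (p := 1) ENNReal.one_ne_top with
  | indicatorConst c hs hμs =>
    rename_i s
    rw [Lp.simpleFunc.coe_indicatorConst]
    refine hd.induction_on (p := fun c => φ (indicatorConstLp 1 hs hμs.ne c) =
      Ψ (indicatorConstLp 1 hs hμs.ne c)) c ?_ fun k => ?_
    · have hc : Continuous fun c : Y => indicatorConstLp 1 hs hμs.ne c :=
        (indicatorConstL1 Y hs hμs.ne).continuous
      exact isClosed_eq (φ.continuous.comp hc) (Ψ.continuous.comp hc)
    · rw [← hA k s hs, ← integral_indicator hs]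
      refine integral_congr_ae ?_
      filter_upwards [hG, indicatorConstLp_coeFn (p := 1) (hs := hs) (hμs := hμs.ne)
        (c := d k)] with ω hω hind
      rw [hind]
      by_cases hωs : ω ∈ s
      · simp [hωs, g', hω, hgd ω hω]
      · simp [hωs]
  | add hf hg _ h1 h2 => rw [map_add, map_add, h1, h2]
  | isClosed => exact isClosed_eq φ.continuous Ψ.continuous

end Representation

open scoped Topology in
/-- Elements of a decreasing sequence of convex sets can be chosen so that their images under a
bounded midpoint-affine map into a Hilbert space form a Cauchy sequence. -/
theorem exists_mem_cauchySeq_of_antitone_convex {V H : Type*} [AddCommGroup V] [Module ℝ V]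
    [NormedAddCommGroup H] [InnerProductSpace ℝ H] {C : ℕ → Set V} (hC : Antitone C)
    (hne : ∀ m, (C m).Nonempty) (hconv : ∀ m, Convex ℝ (C m)) {F : V → H} {R : ℝ}
    (hR : ∀ v ∈ C 0, ‖F v‖ ≤ R)
    (hF : ∀ a ∈ C 0, ∀ b ∈ C 0,
      F ((1 / 2 : ℝ) • a + (1 / 2 : ℝ) • b) = (1 / 2 : ℝ) • (F a + F b)) :
    ∃ v : ℕ → V, (∀ m, v m ∈ C m) ∧ CauchySeq fun m => F (v m) := by
  let ℓ : ℕ → ℝ := fun m => sInf ((fun v => ‖F v‖ ^ 2) '' C m)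
  have hbdd : ∀ m, BddBelow ((fun v => ‖F v‖ ^ 2) '' C m) := fun m =>
    ⟨0, by rintro _ ⟨v, -, rfl⟩; positivity⟩
  have hle : ∀ m, ∀ v ∈ C m, ℓ m ≤ ‖F v‖ ^ 2 := fun m v hv =>
    csInf_le (hbdd m) (mem_image_of_mem _ hv)
  have hmono : Monotone ℓ := fun m n hmn =>
    csInf_le_csInf (hbdd m) ((hne n).image _) (image_mono (hC hmn))
  have hbd : BddAbove (range ℓ) := by
    refine ⟨R ^ 2, ?_⟩
    rintro _ ⟨m, rfl⟩
    obtain ⟨v, hv⟩ := hne m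
    have h1 := hR v (hC m.zero_le hv)
    exact (hle m v hv).trans (pow_le_pow_left₀ (norm_nonneg _) h1 2)
  have htend := tendsto_atTop_ciSup hmono hbd
  set l := ⨆ m, ℓ m
  have hex : ∀ m : ℕ, ∃ v ∈ C m, ‖F v‖ ^ 2 < ℓ m + 1 / ((m : ℝ) + 1) := fun m => by
    obtain ⟨_, ⟨v, hv, rfl⟩, h⟩ := exists_lt_of_csInf_lt ((hne m).image fun v => ‖F v‖ ^ 2)
      (lt_add_of_pos_right (ℓ m) (by positivity : (0 : ℝ) < 1 / ((m : ℝ) + 1)))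
    exact ⟨v, hv, h⟩
  choose v hv hvlt using hex
  refine ⟨v, hv, ?_⟩
  have key : ∀ m n, m ≤ n →
      dist (F (v m)) (F (v n)) ≤ √(2 * (l - ℓ m) + 4 * (1 / ((m : ℝ) + 1))) := by
    intro m n hmn
    refine Real.le_sqrt_of_sq_le ?_
    have hn : v n ∈ C m := hC hmn (hv n)
    have hmid := hle m _ (hconv m (hv m) hn (by norm_num : (0 : ℝ) ≤ 1 / 2)
      (by norm_num : (0 : ℝ) ≤ 1 / 2) (by norm_num))
    rw [hF _ (hC m.zero_le (hv m)) _ (hC m.zero_le hn), norm_smul, mul_pow] at hmid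
    norm_num at hmid
    have hpar := parallelogram_law_with_norm ℝ (F (v m)) (F (v n))
    have hl : ℓ n ≤ l := le_ciSup hbd n
    have hmn' : 1 / ((n : ℝ) + 1) ≤ 1 / ((m : ℝ) + 1) := by gcongr
    have h1 := hvlt m
    have h2 := hvlt n
    rw [dist_eq_norm]
    nlinarith
  refine cauchySeq_of_le_tendsto_0' _ key ?_
  have : Tendsto (fun m : ℕ => √(2 * (l - ℓ m) + 4 * (1 / ((m : ℝ) + 1)))) atTop
      (𝓝 √(2 * (l - l) + 4 * 0)) :=
    (((tendsto_const_nhds.sub htend).const_mul 2).add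
      (tendsto_one_div_add_atTop_nhds_zero_nat.const_mul 4)).sqrt
  simpa using this

section Families

variable {Y : Type*} [NormedAddCommGroup Y] [NormedSpace ℝ Y]

variable (Ω Y) in
/-- The scalarly measurable families of functionals of norm at most `r`. -/
def boundedFamilies (r : ℝ) : Set (Ω → StrongDual ℝ Y) :=
  {g | (∀ y, Measurable fun ω => g ω y) ∧ ∀ ω, ‖g ω‖ ≤ r}

theorem convex_boundedFamilies (r : ℝ) : Convex ℝ (boundedFamilies Ω Y r) := by
  intro g hg h hh a b ha hb hab
  refine ⟨fun y => ?_, fun ω => ?_⟩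
  · exact ((hg.1 y).const_mul a).add ((hh.1 y).const_mul b)
  · have := convex_closedBall (0 : StrongDual ℝ Y) r (by simpa using hg.2 ω) (by simpa using hh.2 ω)
      ha hb hab
    simpa using this

open scoped Topology in
/-- A bounded sequence of functionals that is Cauchy on a dense set converges pointwise. -/
theorem exists_tendsto_of_forall_denseRange {ι : Type*} {d : ι → Y} (hd : DenseRange d)
    {ℓ : ℕ → StrongDual ℝ Y} {r : ℝ} (hℓ : ∀ m, ‖ℓ m‖ ≤ r)
    (hc : ∀ k, CauchySeq fun m => ℓ m (d k)) :
    ∃ g : StrongDual ℝ Y, ‖g‖ ≤ r ∧ ∀ y, Tendsto (fun m => ℓ m y) atTop (𝓝 (g y)) := by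
  have hr : 0 ≤ r := (norm_nonneg _).trans (hℓ 0)
  have hall : ∀ y, ∃ a, Tendsto (fun m => ℓ m y) atTop (𝓝 a) := by
    intro y
    refine cauchySeq_tendsto_of_complete (Metric.cauchySeq_iff.2 fun ε hε => ?_)
    obtain ⟨k, hk⟩ := hd.exists_dist_lt y (by positivity : 0 < ε / (4 * (r + 1)))
    obtain ⟨N, hN⟩ := Metric.cauchySeq_iff.1 (hc k) (ε / 2) (by positivity)
    refine ⟨N, fun m hm n hn => ?_⟩
    have hb : ∀ m, dist (ℓ m y) (ℓ m (d k)) ≤ ε / 4 := fun m => by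
      rw [dist_eq_norm, ← map_sub]
      calc ‖ℓ m (y - d k)‖ ≤ (r + 1) * ‖y - d k‖ :=
            (ℓ m).le_of_opNorm_le ((hℓ m).trans (by linarith)) _
        _ ≤ (r + 1) * (ε / (4 * (r + 1))) := by
            rw [← dist_eq_norm]; gcongr
        _ = ε / 4 := by field_simp
    have h1 := hb m
    have h2 := hb n
    have h3 := hN m hm n hn
    have h4 := dist_triangle4 (ℓ m y) (ℓ m (d k)) (ℓ n (d k)) (ℓ n y)
    rw [dist_comm (ℓ n (d k))] at h4
    linarith
  choose a ha using hall
  let g : StrongDual ℝ Y := LinearMap.mkContinuous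
    { toFun := a
      map_add' := fun x y => tendsto_nhds_unique (ha (x + y)) (by
        simpa using (ha x).add (ha y))
      map_smul' := fun c x => tendsto_nhds_unique (ha (c • x)) (by
        simpa using (ha x).const_mul c) } r fun y =>
      le_of_tendsto (ha y).norm (Eventually.of_forall fun m => (ℓ m).le_of_opNorm_le (hℓ m) y)
  exact ⟨g, LinearMap.mkContinuous_norm_le _ hr _, ha⟩

open scoped Topology in
/-- Mazur-type extraction: from a bounded sequence of scalarly measurable families, forward convex
combinations converge almost everywhere in the weak-star sense. -/
theorem exists_convexHull_tendsto_ae (μ : Measure Ω) [IsProbabilityMeasure μ]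
    [SecondCountableTopology Y] {G : ℕ → Ω → StrongDual ℝ Y}
    (hG : ∀ m, G m ∈ boundedFamilies Ω Y 1) :
    ∃ v : ℕ → Ω → StrongDual ℝ Y, (∀ m, v m ∈ convexHull ℝ (G '' Ici m)) ∧
      ∃ g ∈ boundedFamilies Ω Y 1,
        ∀ᵐ ω ∂μ, ∀ y, Tendsto (fun m => v m ω y) atTop (𝓝 (g ω y)) := by
  classical
  let e := TopologicalSpace.denseSeq Y
  have he : DenseRange e := TopologicalSpace.denseRange_denseSeq Y
  let d : ℕ → Y := fun k => (1 + ‖e k‖)⁻¹ • e k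
  have hd : ∀ k, ‖d k‖ ≤ 1 := fun k => by
    rw [norm_smul, norm_inv, Real.norm_of_nonneg (by positivity), inv_mul_le_one₀ (by positivity)]
    linarith
  let ν : Measure ℕ := (Measure.count : Measure ℕ).toFinite
  let Φ : (Ω → StrongDual ℝ Y) → Ω × ℕ → ℝ := fun g p => g p.1 (d p.2)
  have hΦ : ∀ g ∈ boundedFamilies Ω Y 1, MemLp (Φ g) 2 (μ.prod ν) := fun g hg =>
    MemLp.of_bound (measurable_from_prod_countable_left fun k => hg.1 (d k)).aestronglyMeasurable 1
      (ae_of_all _ fun p => ((g p.1).le_of_opNorm_le (hg.2 _) _).trans (by simpa using hd _))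
  let F : (Ω → StrongDual ℝ Y) → Lp ℝ 2 (μ.prod ν) := fun g =>
    if hg : MemLp (Φ g) 2 (μ.prod ν) then hg.toLp else 0
  have hF : ∀ g (hg : g ∈ boundedFamilies Ω Y 1), F g = (hΦ g hg).toLp := fun g hg =>
    dif_pos (hΦ g hg)
  have hsub : ∀ m, convexHull ℝ (G '' Ici m) ⊆ boundedFamilies Ω Y 1 := fun m =>
    convexHull_min (by rintro _ ⟨k, -, rfl⟩; exact hG k) (convex_boundedFamilies 1)
  obtain ⟨v, hv, hcauchy⟩ := exists_mem_cauchySeq_of_antitone_convex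
    (C := fun m => convexHull ℝ (G '' Ici m)) (F := F)
    (fun m n hmn => convexHull_mono (image_mono (Ici_subset_Ici.2 hmn)))
    (fun m => ((nonempty_Ici).image G).convexHull) (fun m => convex_convexHull ℝ _)
    (fun g hg => by
      rw [hF g (hsub 0 hg)]
      refine Lp.norm_le_of_ae_bound (C := 1) zero_le_one ?_
      filter_upwards [(hΦ g (hsub 0 hg)).coeFn_toLp] with p hp
      rw [hp]
      exact ((g p.1).le_of_opNorm_le ((hsub 0 hg).2 _) _).trans (by simpa using hd _))
    (fun a ha b hb => by
      have hab := convex_boundedFamilies (Ω := Ω) (Y := Y) 1 (hsub 0 ha) (hsub 0 hb)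
        (by norm_num : (0 : ℝ) ≤ 1 / 2) (by norm_num : (0 : ℝ) ≤ 1 / 2) (by norm_num)
      rw [hF _ (hsub 0 ha), hF _ (hsub 0 hb), hF _ hab, ← MemLp.toLp_add, ← MemLp.toLp_const_smul]
      congr 1
      ext p
      simp [Φ, mul_add])
  obtain ⟨f, hf⟩ := cauchySeq_tendsto_of_complete hcauchy
  obtain ⟨ns, hns, hae⟩ := (tendstoInMeasure_of_tendsto_Lp hf).exists_seq_tendsto_ae
  have hvb : ∀ m, v m ∈ boundedFamilies Ω Y 1 := fun m => hsub m (hv m)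
  have hconv : ∀ᵐ ω ∂μ, ∀ k, CauchySeq fun i => v (ns i) ω (e k) := by
    have h1 : ∀ᵐ p ∂μ.prod ν, CauchySeq fun i => Φ (v (ns i)) p := by
      filter_upwards [hae, ae_all_iff.2 fun i => (hΦ _ (hvb (ns i))).coeFn_toLp] with p hp hpi
      refine Tendsto.cauchySeq (x := f p) (hp.congr fun i => ?_)
      rw [hF _ (hvb _), hpi]
    filter_upwards [Measure.ae_ae_of_ae_prod h1] with ω hω k
    rw [ae_toFinite, Measure.ae_count_iff] at hω
    obtain ⟨a, ha⟩ := cauchySeq_tendsto_of_complete (hω k)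
    refine ((ha.const_mul (1 + ‖e k‖)).congr fun i => ?_).cauchySeq
    simp only [Φ, d, map_smul, smul_eq_mul]
    rw [mul_inv_cancel_left₀ (by positivity)]
  obtain ⟨A, hAsub, hAm, hA⟩ : ∃ A : Set Ω, (∀ ω ∈ A, ∀ k, CauchySeq fun i => v (ns i) ω (e k)) ∧
      MeasurableSet A ∧ ∀ᵐ ω ∂μ, ω ∈ A := by
    obtain ⟨N, hN, hNm, hN0⟩ := exists_measurable_superset_of_null (ae_iff.1 hconv)
    refine ⟨Nᶜ, fun ω hω => ?_, hNm.compl, compl_mem_ae_iff.2 hN0⟩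
    by_contra hcon
    exact hω (hN hcon)
  choose! g hg1 hg using fun ω (hω : ω ∈ A) =>
    exists_tendsto_of_forall_denseRange he (fun i => (hvb (ns i)).2 ω) (hAsub ω hω)
  refine ⟨fun i => v (ns i),
    fun i => convexHull_mono (image_mono (Ici_subset_Ici.2 (hns.id_le i))) (hv (ns i)),
    fun ω => if ω ∈ A then g ω else 0, ⟨fun y => ?_, fun ω => ?_⟩, ?_⟩
  · refine measurable_of_tendsto_metrizable (f := fun i => A.indicator fun ω => v (ns i) ω y)
      (fun i => ((hvb _).1 y).indicator hAm) (tendsto_pi_nhds.2 fun ω => ?_)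
    by_cases hω : ω ∈ A
    · simpa [hω] using hg ω hω y
    · simp [hω]
  · by_cases hω : ω ∈ A
    · simpa [hω] using hg1 ω hω
    · simp [hω]
  · filter_upwards [hA] with ω hω y
    simpa [hω] using hg ω hω y

/-- The supremum of a functional over the range of a sequence. -/
def supEval (w : ℕ → Y) (u : StrongDual ℝ Y) : ℝ := ⨆ k, u (w k)

variable {w : ℕ → Y} {R : ℝ}

theorem apply_le_supEval (hw : ∀ k, ‖w k‖ ≤ R) (u : StrongDual ℝ Y) (k : ℕ) :
    u (w k) ≤ supEval w u := by
  refine le_ciSup (f := fun k => u (w k)) ⟨‖u‖ * R, ?_⟩ k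
  rintro _ ⟨k, rfl⟩
  exact (le_abs_self _).trans (u.le_opNorm_of_le (hw k))

theorem apply_le_supEval_of_mem_closure (hw : ∀ k, ‖w k‖ ≤ R) (u : StrongDual ℝ Y) {x : Y}
    (hx : x ∈ closure (range w)) : u x ≤ supEval w u := by
  have hc : IsClosed {x | u x ≤ supEval w u} := isClosed_le u.continuous continuous_const
  refine closure_minimal ?_ hc hx
  rintro _ ⟨k, rfl⟩
  exact apply_le_supEval hw u k

theorem supEval_le_add (hw : ∀ k, ‖w k‖ ≤ R) (u v : StrongDual ℝ Y) :
    supEval w u ≤ supEval w v + ‖u - v‖ * R := by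
  refine ciSup_le fun k => ?_
  have h1 := apply_le_supEval hw v k
  have h2 := (le_abs_self _).trans ((u - v).le_opNorm_of_le (hw k))
  rw [sub_apply] at h2
  linarith

theorem abs_supEval_sub_le (hw : ∀ k, ‖w k‖ ≤ R) (u v : StrongDual ℝ Y) :
    |supEval w u - supEval w v| ≤ ‖u - v‖ * R := by
  have h1 := supEval_le_add hw u v
  have h2 := supEval_le_add hw v u
  rw [norm_sub_rev] at h2
  exact abs_sub_le_iff.2 ⟨by linarith, by linarith⟩

theorem supEval_zero : supEval w 0 = 0 := by simp [supEval]

theorem supEval_half_smul_add_le (hw : ∀ k, ‖w k‖ ≤ R) (u v : StrongDual ℝ Y) :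
    supEval w ((1 / 2 : ℝ) • (u + v)) ≤ (supEval w u + supEval w v) / 2 := by
  refine ciSup_le fun k => ?_
  have h1 := apply_le_supEval hw u k
  have h2 := apply_le_supEval hw v k
  simp only [smul_apply, add_apply, smul_eq_mul]
  linarith

theorem integrable_supEval (μ : Measure Ω) [IsFiniteMeasure μ] (hw : ∀ k, ‖w k‖ ≤ R) {r : ℝ}
    {g : Ω → StrongDual ℝ Y} (hg : g ∈ boundedFamilies Ω Y r) :
    Integrable (fun ω => supEval w (g ω)) μ := by
  have hR : 0 ≤ R := (norm_nonneg _).trans (hw 0)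
  refine Integrable.of_bound (Measurable.iSup fun k => hg.1 (w k)).aestronglyMeasurable (r * R)
    (ae_of_all _ fun ω => ?_)
  have := abs_supEval_sub_le hw (g ω) 0
  rw [supEval_zero, sub_zero, sub_zero] at this
  exact this.trans (mul_le_mul_of_nonneg_right (hg.2 ω) hR)

theorem abs_integral_supEval_sub_le (μ : Measure Ω) [IsProbabilityMeasure μ]
    (hw : ∀ k, ‖w k‖ ≤ R) {r s δ : ℝ} {g h : Ω → StrongDual ℝ Y}
    (hg : g ∈ boundedFamilies Ω Y r) (hh : h ∈ boundedFamilies Ω Y s)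
    (hδ : ∀ ω, ‖g ω - h ω‖ ≤ δ) :
    |∫ ω, supEval w (g ω) ∂μ - ∫ ω, supEval w (h ω) ∂μ| ≤ δ * R := by
  have hR : 0 ≤ R := (norm_nonneg _).trans (hw 0)
  rw [← integral_sub (integrable_supEval μ hw hg) (integrable_supEval μ hw hh)]
  have := norm_integral_le_of_norm_le (f := fun ω => supEval w (g ω) - supEval w (h ω))
    (integrable_const (μ := μ) (δ * R)) (ae_of_all μ fun ω =>
    (abs_supEval_sub_le hw (g ω) (h ω)).trans (mul_le_mul_of_nonneg_right (hδ ω) hR))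
  simpa using this

theorem add_smul_mem_boundedFamilies {r s a : ℝ} (ha : 0 ≤ a) {g h : Ω → StrongDual ℝ Y}
    (hg : g ∈ boundedFamilies Ω Y r) (hh : h ∈ boundedFamilies Ω Y s) :
    g + a • h ∈ boundedFamilies Ω Y (r + a * s) := by
  refine ⟨fun y => (hg.1 y).add ((hh.1 y).const_mul a), fun ω => ?_⟩
  refine (norm_add_le _ _).trans (add_le_add (hg.2 ω) ?_)
  rw [Pi.smul_apply, norm_smul, Real.norm_of_nonneg ha]
  exact mul_le_mul_of_nonneg_left (hh.2 ω) ha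

open scoped Topology in
/-- A Simons-type inequality: if `g k → 0` almost everywhere weak-star and every functional attains
its supremum over the closure of the range of `w`, then convex combinations of the `g k` have
arbitrarily small integrated supremum. -/
theorem exists_convexHull_integral_supEval_lt (μ : Measure Ω) [IsProbabilityMeasure μ]
    (hw : ∀ k, ‖w k‖ ≤ R)
    (hatt : ∀ u : StrongDual ℝ Y, ∃ x ∈ closure (range w), ∀ k, u (w k) ≤ u x)
    {C : ℝ} {g : ℕ → Ω → StrongDual ℝ Y} (hg : ∀ k, g k ∈ boundedFamilies Ω Y C)
    (hlim : ∀ᵐ ω ∂μ, ∀ y, Tendsto (fun k => g k ω y) atTop (𝓝 0)) {c : ℝ} (hc : 0 < c) :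
    ∃ v ∈ convexHull ℝ (range g), ∫ ω, supEval w (v ω) ∂μ < c := by
  by_contra! hcon
  have hR : 0 ≤ R := (norm_nonneg _).trans (hw 0)
  have hC : 0 ≤ C := by
    obtain ⟨ω⟩ := μ.nonempty_of_neZero
    exact (norm_nonneg _).trans ((hg 0).2 ω)
  let K : ℕ → Set (Ω → StrongDual ℝ Y) := fun n => convexHull ℝ (g '' Ici n)
  have hKanti : Antitone K := fun m n hmn => convexHull_mono (image_mono (Ici_subset_Ici.2 hmn))
  have hKb : ∀ n, K n ⊆ boundedFamilies Ω Y C := fun n =>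
    convexHull_min (by rintro _ ⟨k, -, rfl⟩; exact hg k) (convex_boundedFamilies C)
  have hKne : ∀ n, (K n).Nonempty := fun n => (nonempty_Ici.image g).convexHull
  let p : (Ω → StrongDual ℝ Y) → ℝ := fun v => ∫ ω, supEval w (v ω) ∂μ
  let ε : ℕ → ℝ := fun n => c * (1 / 2) ^ n * (1 / 2) ^ (n + 2)
  have hε : ∀ n, 0 < ε n := fun n => by positivity
  have hstep : ∀ n, ∀ u ∈ boundedFamilies Ω Y C, ∃ v ∈ K n, ∀ v' ∈ K n,
      p (u + (1 / 2 : ℝ) ^ n • v) ≤ p (u + (1 / 2 : ℝ) ^ n • v') + ε n := by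
    intro n u hu
    have hbdd : BddBelow ((fun v => p (u + (1 / 2 : ℝ) ^ n • v)) '' K n) := by
      refine ⟨p u - (1 / 2) ^ n * C * R, ?_⟩
      rintro _ ⟨v, hv, rfl⟩
      have := abs_integral_supEval_sub_le μ hw hu
        (add_smul_mem_boundedFamilies (a := (1 / 2 : ℝ) ^ n) (by positivity) hu (hKb n hv))
        (δ := (1 / 2) ^ n * C) (fun ω => by
          rw [Pi.add_apply, Pi.smul_apply, sub_add_cancel_left, norm_neg, norm_smul,
            Real.norm_of_nonneg (by positivity)]
          exact mul_le_mul_of_nonneg_left ((hKb n hv).2 ω) (by positivity))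
      have h2 := (abs_le.1 this).2
      change p u - _ ≤ _ at h2 ⊢
      linarith
    obtain ⟨_, ⟨v, hv, rfl⟩, h⟩ := exists_lt_of_csInf_lt
      ((hKne n).image fun v => p (u + (1 / 2 : ℝ) ^ n • v)) (lt_add_of_pos_right _ (hε n))
    exact ⟨v, hv, fun v' hv' => h.le.trans (by
      gcongr
      exact csInf_le hbdd (mem_image_of_mem _ hv'))⟩
  choose! f hfK hfmin using hstep
  let u : ℕ → Ω → StrongDual ℝ Y := fun n =>
    Nat.rec 0 (fun n u => u + (1 / 2 : ℝ) ^ (n + 1) • f n u) n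
  have hu0 : u 0 = 0 := rfl
  have hus : ∀ n, u (n + 1) = u n + (1 / 2 : ℝ) ^ (n + 1) • f n (u n) := fun n => rfl
  clear_value u
  have hub' : ∀ n, u n ∈ boundedFamilies Ω Y (C * (1 - (1 / 2) ^ n)) ∧
      u n ∈ boundedFamilies Ω Y C := by
    have hle : ∀ n : ℕ, C * (1 - (1 / 2) ^ n) ≤ C := fun n => by
      have : 0 ≤ C * (1 / 2) ^ n := by positivity
      linarith
    intro n
    induction n with
    | zero =>
      rw [hu0]
      exact ⟨⟨fun y => measurable_const, fun ω => by simp⟩, ⟨fun y => measurable_const,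
        fun ω => by simpa using hC⟩⟩
    | succ n ih =>
      have h1 := add_smul_mem_boundedFamilies (a := (1 / 2 : ℝ) ^ (n + 1)) (by positivity) ih.1
        (hKb n (hfK n _ ih.2))
      rw [← hus] at h1
      have h2 : C * (1 - (1 / 2) ^ n) + (1 / 2) ^ (n + 1) * C = C * (1 - (1 / 2) ^ (n + 1)) := by
        ring
      rw [h2] at h1
      exact ⟨h1, h1.1, fun ω => (h1.2 ω).trans (hle _)⟩
  have hub := fun n => (hub' n).2
  have hvK : ∀ n, f n (u n) ∈ K n := fun n => hfK n _ (hub n)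
  have hmin := fun n => hfmin n _ (hub n)
  set v : ℕ → Ω → StrongDual ℝ Y := fun n => f n (u n) with hv
  have hus : ∀ n, u (n + 1) = u n + (1 / 2 : ℝ) ^ (n + 1) • v n := hus
  let q : ℕ → Ω → StrongDual ℝ Y := fun n => u n + (1 / 2 : ℝ) ^ n • v n
  have hqz : ∀ j n, ∃ z ∈ K n, q (n + j) = u n + (1 / 2 : ℝ) ^ n • z := by
    intro j
    induction j with
    | zero => exact fun n => ⟨v n, hvK n, rfl⟩
    | succ j ih =>
      intro n
      obtain ⟨z, hz, hqz⟩ := ih (n + 1)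
      refine ⟨(1 / 2 : ℝ) • v n + (1 / 2 : ℝ) • z, convex_convexHull ℝ _ (hvK n)
        (hKanti n.le_succ hz) (by norm_num) (by norm_num) (by norm_num), ?_⟩
      rw [show n + (j + 1) = n + 1 + j by ring, hqz, hus]
      module
  have hdist : ∀ ω n, dist (u n ω) (u (n + 1) ω) ≤ C / 2 / 2 ^ n := fun ω n => by
    rw [hus, Pi.add_apply, Pi.smul_apply, dist_eq_norm, sub_add_cancel_left, norm_neg, norm_smul,
      Real.norm_of_nonneg (by positivity)]
    calc (1 / 2 : ℝ) ^ (n + 1) * ‖v n ω‖ ≤ (1 / 2 : ℝ) ^ (n + 1) * C := by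
          gcongr; exact (hKb n (hvK n)).2 ω
      _ = C / 2 / 2 ^ n := by rw [one_div, inv_pow]; field_simp; ring
  choose ul hul using fun ω => cauchySeq_tendsto_of_complete
    (cauchySeq_of_le_geometric_two (hdist ω))
  have huldist : ∀ ω n, ‖u n ω - ul ω‖ ≤ C / 2 ^ n := fun ω n => by
    rw [← dist_eq_norm]
    exact dist_le_of_le_geometric_two_of_tendsto (hdist ω) (hul ω) n
  have hulb : ul ∈ boundedFamilies Ω Y C := by
    refine ⟨fun y => ?_, fun ω => le_of_tendsto (hul ω).norm
      (Eventually.of_forall fun n => (hub n).2 ω)⟩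
    exact measurable_of_tendsto_metrizable (fun n => (hub n).1 y) (tendsto_pi_nhds.2 fun ω =>
      ((ContinuousLinearMap.apply ℝ ℝ y).continuous.tendsto _).comp (hul ω))
  have hqdist : ∀ ω n, ‖q n ω - ul ω‖ ≤ 2 * C / 2 ^ n := fun ω n => by
    have h1 := huldist ω n
    have h2 : ‖(1 / 2 : ℝ) ^ n • v n ω‖ ≤ C / 2 ^ n := by
      rw [norm_smul, Real.norm_of_nonneg (by positivity), one_div, inv_pow, mul_comm,
        ← div_eq_mul_inv]
      gcongr
      exact (hKb n (hvK n)).2 ω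
    calc ‖q n ω - ul ω‖ = ‖(u n ω - ul ω) + (1 / 2 : ℝ) ^ n • v n ω‖ := by
          congr 1; simp only [q, Pi.add_apply, Pi.smul_apply]; abel
      _ ≤ _ := (norm_add_le _ _).trans (add_le_add h1 h2)
      _ = _ := by ring
  have hgeo : ∀ a : ℝ, Tendsto (fun n : ℕ => a / 2 ^ n) atTop (𝓝 0) := fun a => by
    have := (tendsto_pow_atTop_nhds_zero_of_lt_one (r := (1 / 2 : ℝ)) (by norm_num)
      (by norm_num)).const_mul a
    simpa [div_eq_mul_inv] using this
  have hqul : ∀ ω, Tendsto (fun n => q n ω) atTop (𝓝 (ul ω)) := fun ω =>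
    tendsto_iff_norm_sub_tendsto_zero.2
      (squeeze_zero (fun _ => norm_nonneg _) (hqdist ω) (hgeo _))
  have hqb : ∀ n, q n ∈ boundedFamilies Ω Y (C + (1 / 2) ^ n * C) := fun n =>
    add_smul_mem_boundedFamilies (by positivity) (hub n) (hKb n (hvK n))
  have hpq : Tendsto (fun n => p (q n)) atTop (𝓝 (p ul)) := by
    refine tendsto_iff_norm_sub_tendsto_zero.2 (squeeze_zero (fun _ => norm_nonneg _)
      (fun n => abs_integral_supEval_sub_le μ hw (hqb n) hulb fun ω => hqdist ω n) ?_)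
    simpa using (hgeo (2 * C)).mul_const R
  have hpul : c ≤ p ul := by
    refine ge_of_tendsto hpq (Eventually.of_forall fun n => ?_)
    obtain ⟨z, hz, hqz⟩ := hqz n 0
    rw [zero_add, hu0, pow_zero, one_smul, zero_add] at hqz
    rw [hqz]
    exact hcon z (convexHull_mono (image_subset_range _ _) hz)
  have hpqle : ∀ n, p (q n) ≤ p ul + ε n := fun n => by
    refine ge_of_tendsto (hpq.add_const (ε n)) ((eventually_ge_atTop n).mono fun N hN => ?_)
    obtain ⟨z, hz, hqz⟩ := hqz (N - n) n
    rw [Nat.add_sub_cancel' hN] at hqz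
    rw [hqz]
    exact hmin n z hz
  have hpu : ∀ n, p (u (n + 1)) ≤ (p (u n) + p (q n)) / 2 := fun n => by
    have h1 := integrable_supEval μ hw (hub n)
    have h2 := integrable_supEval μ hw (hqb n)
    calc p (u (n + 1)) ≤ ∫ ω, (supEval w (u n ω) + supEval w (q n ω)) / 2 ∂μ := by
          refine integral_mono (integrable_supEval μ hw (hub _)) ((h1.add h2).div_const 2)
            fun ω => ?_
          have : u (n + 1) ω = (1 / 2 : ℝ) • (u n ω + q n ω) := by
            simp only [hus, q, Pi.add_apply, Pi.smul_apply]
            module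
          simp only [this]
          exact supEval_half_smul_add_le hw _ _
      _ = _ := by rw [integral_div, integral_add h1 h2]
  have hb : ∀ n, c / 2 + c / 2 * (1 / 2) ^ n ≤ 2 ^ n * (p ul - p (u n)) := by
    intro n
    induction n with
    | zero =>
      have : p (u 0) = 0 := by simp [p, hu0, supEval_zero]
      rw [this]
      norm_num
      exact hpul
    | succ n ih =>
      have h1 := hpu n
      have h2 := hpqle n
      have h3 : (p ul - p (u n)) / 2 - ε n / 2 ≤ p ul - p (u (n + 1)) := by linarith
      have h4 : (2 : ℝ) ^ n * (1 / 2) ^ n = 1 := by rw [← mul_pow]; norm_num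
      calc c / 2 + c / 2 * (1 / 2) ^ (n + 1)
          = c / 2 + c / 2 * (1 / 2) ^ n - (2 ^ n * (1 / 2) ^ n) * c * (1 / 2) ^ (n + 2) := by
            rw [h4]; ring
        _ ≤ 2 ^ n * (p ul - p (u n)) - (2 ^ n * (1 / 2) ^ n) * c * (1 / 2) ^ (n + 2) := by gcongr
        _ = 2 ^ (n + 1) * ((p ul - p (u n)) / 2 - ε n / 2) := by simp only [ε]; ring
        _ ≤ _ := by gcongr
  let h : ℕ → Ω → ℝ := fun n ω => 2 ^ n * (supEval w (ul ω) - supEval w (u n ω))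
  have hbound : ∀ ω, ∃ x : Y, ‖x‖ ≤ R ∧
      ∀ n η, (∀ k, n ≤ k → g k ω x ≤ η) → h n ω ≤ η := by
    intro ω
    obtain ⟨x, hx, hxmax⟩ := hatt (ul ω)
    have hxR : ‖x‖ ≤ R := by
      refine closure_minimal ?_ (isClosed_le continuous_norm continuous_const) hx
      rintro _ ⟨k, rfl⟩
      exact hw k
    refine ⟨x, hxR, fun n η hη => ?_⟩
    have h1 : supEval w (ul ω) ≤ ul ω x := ciSup_le hxmax
    have h2 := apply_le_supEval_of_mem_closure hw (u n ω) hx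
    have hKη : ∀ z ∈ K n, z ω x ≤ η := by
      refine convexHull_min (t := {z : Ω → StrongDual ℝ Y | z ω x ≤ η}) ?_ ?_
      · rintro _ ⟨k, hk, rfl⟩
        exact hη k hk
      · intro z₁ hz₁ z₂ hz₂ a b ha hb hab
        change a * z₁ ω x + b * z₂ ω x ≤ η
        have h3 := mul_le_mul_of_nonneg_left hz₁ ha
        have h4 := mul_le_mul_of_nonneg_left hz₂ hb
        have h5 : a * η + b * η = η := by rw [← add_mul, hab, one_mul]
        exact (add_le_add h3 h4).trans h5.le
    have h3 : ul ω x ≤ u n ω x + (1 / 2) ^ n * η := by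
      refine le_of_tendsto (((ContinuousLinearMap.apply ℝ ℝ x).continuous.tendsto _).comp (hqul ω))
        ((eventually_ge_atTop n).mono fun N hN => ?_)
      obtain ⟨z, hz, hqz⟩ := hqz (N - n) n
      rw [Nat.add_sub_cancel' hN] at hqz
      have h4 := hKη z hz
      change q N ω x ≤ _
      rw [hqz]
      change u n ω x + (1 / 2) ^ n * z ω x ≤ _
      gcongr
    have h4 : (2 : ℝ) ^ n * (1 / 2) ^ n = 1 := by rw [← mul_pow]; norm_num
    calc h n ω ≤ 2 ^ n * ((1 / 2) ^ n * η) := by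
          refine mul_le_mul_of_nonneg_left ?_ (by positivity)
          linarith
      _ = η := by rw [← mul_assoc, h4, one_mul]
  have hint : ∀ n, Integrable (h n) μ := fun n =>
    ((integrable_supEval μ hw hulb).sub (integrable_supEval μ hw (hub n))).const_mul _
  have hDCT : Tendsto (fun n => ∫ ω, max (h n ω) 0 ∂μ) atTop (𝓝 (∫ _, (0 : ℝ) ∂μ)) := by
    refine tendsto_integral_of_dominated_convergence (fun _ => C * R)
      (fun n => (hint n).aestronglyMeasurable.sup aestronglyMeasurable_const)
      (integrable_const _) (fun n => ae_of_all _ fun ω => ?_) ?_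
    · obtain ⟨x, hxR, hx⟩ := hbound ω
      rw [Real.norm_of_nonneg (le_max_right _ _)]
      refine max_le (hx n _ fun k _ => ?_) (by positivity)
      exact (le_abs_self _).trans ((g k ω).le_of_opNorm_le_of_le ((hg k).2 ω) hxR)
    · filter_upwards [hlim] with ω hω
      obtain ⟨x, hxR, hx⟩ := hbound ω
      refine tendsto_order.2 ⟨fun a ha => Eventually.of_forall fun n => ha.trans_le
        (le_max_right _ _), fun a ha => ?_⟩
      obtain ⟨N, hN⟩ := eventually_atTop.1 ((hω x).eventually_lt_const (half_pos ha))
      refine (eventually_ge_atTop N).mono fun n hn => max_lt ?_ ha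
      exact (hx n (a / 2) fun k hk => (hN k (hn.trans hk)).le).trans_lt (half_lt_self ha)
  rw [integral_zero] at hDCT
  have : c / 2 ≤ 0 := ge_of_tendsto hDCT (Eventually.of_forall fun n => by
    have h1 : ∫ ω, h n ω ∂μ = 2 ^ n * (p ul - p (u n)) := by
      rw [integral_const_mul, integral_sub (integrable_supEval μ hw hulb)
        (integrable_supEval μ hw (hub n))]
    have h2 : c / 2 ≤ ∫ ω, h n ω ∂μ := by
      rw [h1]
      refine le_trans ?_ (hb n)
      have : 0 ≤ c / 2 * (1 / 2) ^ n := by positivity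
      linarith
    exact h2.trans (integral_mono (hint n) ((hint n).sup (integrable_const 0))
      fun ω => le_max_left _ _))
  linarith

theorem integral_combo_apply (μ : Measure Ω) [SecondCountableTopology Y] {r : ℝ}
    {g h : Ω → StrongDual ℝ Y} (hg : g ∈ boundedFamilies Ω Y r) (hh : h ∈ boundedFamilies Ω Y r)
    (a b : ℝ) (f : Lp Y 1 μ) :
    ∫ ω, (a • g + b • h) ω (f ω) ∂μ = a * ∫ ω, g ω (f ω) ∂μ + b * ∫ ω, h ω (f ω) ∂μ := by
  rw [← integral_const_mul, ← integral_const_mul, ← integral_add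
    ((integrable_apply_apply μ hg.1 hg.2 f).const_mul a)
    ((integrable_apply_apply μ hh.1 hh.2 f).const_mul b)]
  rfl

open scoped Topology in
/-- There is no triangular system of functionals on `L¹(μ, Y)` and functions with values in a
separable bounded set on which every functional attains its supremum. -/
theorem not_exists_triangular_of_attaining (μ : Measure Ω) [IsProbabilityMeasure μ]
    [SecondCountableTopology Y] (hw : ∀ k, ‖w k‖ ≤ R)
    (hatt : ∀ u : StrongDual ℝ Y, ∃ x ∈ closure (range w), ∀ k, u (w k) ≤ u x)
    {φ : ℕ → StrongDual ℝ (Lp Y 1 μ)} (hφ : ∀ m, ‖φ m‖ ≤ 1) {z : ℕ → Lp Y 1 μ}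
    (hz : ∀ n, ∀ᵐ ω ∂μ, z n ω ∈ closure (range w)) {c : ℝ} (hc : 0 < c) :
    ¬ ((∀ m n, m ≤ n → c < φ m (z n)) ∧ ∀ m n, n < m → φ m (z n) = 0) := by
  rintro ⟨hlt, hzero⟩
  choose G hGm hG1 hG using fun m => exists_representation_of_strongDual_L1 μ (φ m) (hφ m)
  have hGb : ∀ m, G m ∈ boundedFamilies Ω Y 1 := fun m => ⟨hGm m, hG1 m⟩
  obtain ⟨v, hv, g, hg, hlim⟩ := exists_convexHull_tendsto_ae μ hGb
  have hlarge : ∀ r, Convex ℝ {h : Ω → StrongDual ℝ Y | h ∈ boundedFamilies Ω Y r ∧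
      ∀ᶠ n in atTop, c ≤ ∫ ω, h ω (z n ω) ∂μ} := by
    intro r h₁ hh₁ h₂ hh₂ a b ha hb hab
    refine ⟨convex_boundedFamilies r hh₁.1 hh₂.1 ha hb hab, ?_⟩
    filter_upwards [hh₁.2, hh₂.2] with n hn₁ hn₂
    rw [integral_combo_apply μ hh₁.1 hh₂.1]
    calc c = a * c + b * c := by rw [← add_mul, hab, one_mul]
      _ ≤ _ := by gcongr
  have hnull : ∀ n, Convex ℝ {h : Ω → StrongDual ℝ Y | h ∈ boundedFamilies Ω Y 1 ∧
      ∫ ω, h ω (z n ω) ∂μ = 0} := by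
    intro n h₁ hh₁ h₂ hh₂ a b ha hb hab
    refine ⟨convex_boundedFamilies 1 hh₁.1 hh₂.1 ha hb hab, ?_⟩
    rw [integral_combo_apply μ hh₁.1 hh₂.1, hh₁.2, hh₂.2]
    simp
  have hvlarge : ∀ m, v m ∈ boundedFamilies Ω Y 1 ∧
      ∀ᶠ n in atTop, c ≤ ∫ ω, v m ω (z n ω) ∂μ := fun m => by
    refine convexHull_min ?_ (hlarge 1) (hv m)
    rintro _ ⟨k, -, rfl⟩
    refine ⟨hGb k, (eventually_ge_atTop k).mono fun n hn => ?_⟩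
    rw [← hG]
    exact (hlt k n hn).le
  have hvnull : ∀ m n, n < m → ∫ ω, v m ω (z n ω) ∂μ = 0 := fun m n hnm => by
    refine (convexHull_min ?_ (hnull n) (hv m)).2
    rintro _ ⟨k, hk, rfl⟩
    exact ⟨hGb k, by rw [← hG, hzero k n (hnm.trans_le hk)]⟩
  have hvb := fun m => (hvlarge m).1
  have hgnull : ∀ n, ∫ ω, g ω (z n ω) ∂μ = 0 := fun n => by
    have h1 : Tendsto (fun m => ∫ ω, v m ω (z n ω) ∂μ) atTop (𝓝 (∫ ω, g ω (z n ω) ∂μ)) := by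
      refine tendsto_integral_of_dominated_convergence (fun ω => 1 * ‖z n ω‖)
        (fun m => (integrable_apply_apply μ (hvb m).1 (hvb m).2 _).aestronglyMeasurable)
        ((L1.integrable_coeFn (z n)).norm.const_mul 1)
        (fun m => ae_of_all _ fun ω => (v m ω).le_of_opNorm_le ((hvb m).2 ω) _) ?_
      filter_upwards [hlim] with ω hω
      exact hω _
    refine tendsto_nhds_unique h1 (tendsto_const_nhds.congr' ?_)
    filter_upwards [eventually_gt_atTop n] with m hm
    rw [hvnull m n hm]
  have hsubb : ∀ m, v m - g ∈ boundedFamilies Ω Y 2 := fun m =>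
    ⟨fun y => ((hvb m).1 y).sub (hg.1 y), fun ω => (norm_sub_le _ _).trans (by
      linarith [(hvb m).2 ω, hg.2 ω])⟩
  obtain ⟨h, hh, hhlt⟩ := exists_convexHull_integral_supEval_lt μ hw hatt hsubb (by
    filter_upwards [hlim] with ω hω y
    simpa using (hω y).sub_const (g ω y)) hc
  have hmem := convexHull_min (by
    rintro _ ⟨m, rfl⟩
    refine ⟨hsubb m, (hvlarge m).2.mono fun n hn => ?_⟩
    have : ∫ ω, (v m - g) ω (z n ω) ∂μ = ∫ ω, v m ω (z n ω) ∂μ - ∫ ω, g ω (z n ω) ∂μ :=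
      integral_sub (integrable_apply_apply μ (hvb m).1 (hvb m).2 _)
        (integrable_apply_apply μ hg.1 hg.2 _)
    rw [this, hgnull, sub_zero]
    exact hn) (hlarge 2) hh
  obtain ⟨n, hn⟩ := hmem.2.exists
  refine (hhlt.trans_le hn).not_ge (integral_mono_ae
    (integrable_apply_apply μ hmem.1.1 hmem.1.2 _) (integrable_supEval μ hw hmem.1) ?_)
  filter_upwards [hz n] with ω hω
  exact apply_le_supEval_of_mem_closure hw _ hω

end Families

/-- A functional attains its supremum on the trace of a weakly compact set on a closed subspace. -/
theorem IsWeaklyCompact.exists_isMaxOn_subspace {W : Set X} (hW : IsWeaklyCompact W)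
    {Y : Submodule ℝ X} (hY : IsClosed (Y : Set X)) (hne : ((↑) ⁻¹' W : Set Y).Nonempty)
    (u : StrongDual ℝ Y) : ∃ x ∈ ((↑) ⁻¹' W : Set Y), ∀ y ∈ ((↑) ⁻¹' W : Set Y), u y ≤ u x := by
  obtain ⟨g, hg, -⟩ := exists_extension_norm_eq Y u
  have hYc : IsClosed (toWeakSpace ℝ X '' (Y : Set X)) := by
    have := Y.convex.toWeakSpace_closure ℝ
    rw [hY.closure_eq] at this
    rw [this]
    exact isClosed_closure
  have hc : IsCompact (toWeakSpace ℝ X '' W ∩ toWeakSpace ℝ X '' (Y : Set X)) :=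
    hW.inter_right hYc
  have hcont : Continuous fun x : WeakSpace ℝ X => g ((toWeakSpace ℝ X).symm x) :=
    WeakBilin.eval_continuous (topDualPairing ℝ X).flip g
  have hmem : ∀ y : Y, (y : X) ∈ W →
      toWeakSpace ℝ X y ∈ toWeakSpace ℝ X '' W ∩ toWeakSpace ℝ X '' (Y : Set X) := fun y hy =>
    ⟨mem_image_of_mem _ hy, mem_image_of_mem _ y.2⟩
  obtain ⟨y₀, hy₀⟩ := hne
  obtain ⟨_, ⟨⟨x, hxW, rfl⟩, ⟨x', hxY, hxx'⟩⟩, hmax⟩ :=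
    hc.exists_isMaxOn ⟨_, hmem y₀ hy₀⟩ hcont.continuousOn
  obtain rfl := (toWeakSpace ℝ X).injective hxx'
  refine ⟨⟨x', hxY⟩, hxW, fun y hy => ?_⟩
  have := hmax (hmem y hy)
  have h1 := hg ⟨x', hxY⟩
  simpa [hg, ← h1] using this

/-- A sequence in `L¹(μ, X)` takes its values in a common closed separable subspace. -/
theorem exists_isClosed_isSeparable_submodule_forall_mem {μ : Measure Ω}
    (z : ℕ → Lp X 1 μ) :
    ∃ Y : Submodule ℝ X, IsClosed (Y : Set X) ∧ TopologicalSpace.IsSeparable (Y : Set X) ∧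
      ∀ n ω, z n ω ∈ Y := by
  let S : Set X := ⋃ n, range (z n)
  have hS : TopologicalSpace.IsSeparable S :=
    TopologicalSpace.IsSeparable.iUnion fun n => (Lp.stronglyMeasurable (z n)).isSeparable_range
  refine ⟨(Submodule.span ℝ S).topologicalClosure, Submodule.isClosed_topologicalClosure _, ?_,
    fun n ω => Submodule.le_topologicalClosure _
      (Submodule.subset_span (mem_iUnion.2 ⟨n, mem_range_self ω⟩))⟩
  rw [Submodule.topologicalClosure_coe]
  exact hS.span.closure

theorem exists_compLpL_subtypeL_eq {μ : Measure Ω} {Y : Submodule ℝ X} (f : Lp X 1 μ)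
    (hf : ∀ ω, f ω ∈ Y) : ∃ h : Lp Y 1 μ, Y.subtypeL.compLpL 1 μ h = f := by
  let h₀ : Ω → Y := fun ω => ⟨f ω, hf ω⟩
  have hm : AEStronglyMeasurable h₀ μ :=
    Topology.IsEmbedding.subtypeVal.aestronglyMeasurable_comp_iff.1
      (Lp.stronglyMeasurable f).aestronglyMeasurable
  have hLp : MemLp h₀ 1 μ := (Lp.memLp f).of_le hm (ae_of_all _ fun ω => le_rfl)
  refine ⟨hLp.toLp, Lp.ext ?_⟩
  filter_upwards [Y.subtypeL.coeFn_compLpL (p := 1) (μ := μ) hLp.toLp, hLp.coeFn_toLp] with ω h1 h2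
  rw [h1, h2]
  rfl

theorem isRelWeaklyCompact_of_isWeaklyCompact (μ : Measure Ω) [IsProbabilityMeasure μ]
    [CompleteSpace X] {W : Set X} (hW : IsWeaklyCompact W) :
    IsRelWeaklyCompact {f : Lp X 1 μ | ∀ᵐ ω ∂μ, (f : Ω → X) ω ∈ W} := by
  by_contra hcon
  obtain ⟨R, hR0, hR⟩ := hW.exists_norm_le
  have hbdd : Bornology.IsBounded {f : Lp X 1 μ | ∀ᵐ ω ∂μ, (f : Ω → X) ω ∈ W} :=
    isBounded_iff_forall_norm_le.2 ⟨R, fun f (hf : ∀ᵐ ω ∂μ, f ω ∈ W) =>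
      norm_le_of_ae_norm_le μ (hf.mono fun ω hω => hR _ hω)⟩
  obtain ⟨c, hc, φ, z, hφ, hzW, hlt, hzero⟩ := exists_seq_of_not_isRelWeaklyCompact hbdd hcon
  obtain ⟨Y, hYc, hYs, hzY⟩ := exists_isClosed_isSeparable_submodule_forall_mem z
  have : TopologicalSpace.SeparableSpace Y := hYs.separableSpace
  have : SecondCountableTopology Y := UniformSpace.secondCountable_of_separable Y
  choose z' hz' using fun n => exists_compLpL_subtypeL_eq (z n) (hzY n)
  let W' : Set Y := (↑) ⁻¹' W
  have hz'W : ∀ n, ∀ᵐ ω ∂μ, z' n ω ∈ W' := fun n => by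
    have h1 : ∀ᵐ ω ∂μ, z n ω ∈ W := hzW n
    filter_upwards [h1, Y.subtypeL.coeFn_compLpL (p := 1) (μ := μ) (z' n)] with ω h1 h2
    rw [hz'] at h2
    rw [h2] at h1
    exact h1
  have hne : W'.Nonempty := by
    obtain ⟨ω, hω⟩ := (hz'W 0).exists
    exact ⟨_, hω⟩
  have : Nonempty W' := hne.to_subtype
  let w : ℕ → Y := fun k => TopologicalSpace.denseSeq W' k
  have hwW : ∀ k, w k ∈ W' := fun k => (TopologicalSpace.denseSeq W' k).2
  have hcl : W' ⊆ closure (range w) := fun y hy => by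
    have h1 := TopologicalSpace.denseRange_denseSeq W' ⟨y, hy⟩
    have h2 := image_closure_subset_closure_image (s := range (TopologicalSpace.denseSeq W'))
      (continuous_subtype_val (p := (· ∈ W'))) (mem_image_of_mem _ h1)
    rwa [← range_comp] at h2
  refine not_exists_triangular_of_attaining μ (w := w) (R := R) (fun k => hR _ (hwW k))
    (fun u => ?_) (φ := fun m => φ m ∘L Y.subtypeL.compLpL 1 μ) (fun m => ?_) (z := z')
    (fun n => (hz'W n).mono fun ω hω => hcl hω) hc
    ⟨fun m n hmn => by simpa [hz'] using hlt m n hmn, fun m n hnm => by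
      simpa [hz'] using hzero m n hnm⟩
  · obtain ⟨x, hx, hmax⟩ := hW.exists_isMaxOn_subspace hYc hne u
    exact ⟨x, hcl hx, fun k => hmax _ (hwW k)⟩
  · refine (ContinuousLinearMap.opNorm_comp_le _ _).trans ?_
    exact mul_le_one₀ (hφ m) (norm_nonneg _)
      ((ContinuousLinearMap.norm_compLpL_le _).trans Y.norm_subtypeL_le)

/-- For a weakly compact `W ⊆ X`, the set `L(W) = {f ∈ L¹(μ,X) : f(ω) ∈ W μ-a.e.}` is a
δS-set; in particular it is relatively weakly compact in `L¹(μ,X)`. -/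
theorem isDeltaSSet_LW (μ : Measure Ω) [IsProbabilityMeasure μ] [CompleteSpace X]
    (W : Set X) (hW : IsWeaklyCompact W) :
    IsDeltaSSet μ {f : Lp X 1 μ | ∀ᵐ ω ∂μ, (f : Ω → X) ω ∈ W} ∧
      IsRelWeaklyCompact {f : Lp X 1 μ | ∀ᵐ ω ∂μ, (f : Ω → X) ω ∈ W} :=
  ⟨isDeltaSSet_of_isWeaklyCompact μ hW, isRelWeaklyCompact_of_isWeaklyCompact μ hW⟩
end
end

section
/- Let (Ω,Σ,μ) be a probability space, (X_n) a sequence of Banach spaces each having property (δS_μ), and 1 < r < ∞. Then X = ℓ^r(X_n) has property (δS_μ); that is, every relatively weakly compact subset of L¹(μ,X) is a δS-set. -/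
open MeasureTheory Filter Set ENNReal Pointwise

noncomputable section

variable {Ω : Type*} [MeasurableSpace Ω] {X : Type*} [NormedAddCommGroup X] [NormedSpace ℝ X]

section WeakTopology

variable {E F : Type*} [NormedAddCommGroup E] [NormedSpace ℝ E]
  [NormedAddCommGroup F] [NormedSpace ℝ F]

lemma continuous_eval_weakSpace (φ : StrongDual ℝ E) :
    Continuous fun x : WeakSpace ℝ E => φ ((toWeakSpace ℝ E).symm x) :=
  WeakBilin.eval_continuous (topDualPairing ℝ E).flip φ

lemma tendsto_toWeakSpace_iff {ι : Type*} {l : Filter ι} {f : ι → E} {x : E} :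
    Tendsto (fun i => toWeakSpace ℝ E (f i)) l (nhds (toWeakSpace ℝ E x)) ↔
      ∀ φ : StrongDual ℝ E, Tendsto (fun i => φ (f i)) l (nhds (φ x)) := by
  refine ⟨fun h φ => ((continuous_eval_weakSpace φ).tendsto _).comp h, fun h => ?_⟩
  have hind : Topology.IsInducing fun (x : WeakSpace ℝ E) (φ : StrongDual ℝ E) =>
      φ ((toWeakSpace ℝ E).symm x) := ⟨rfl⟩
  exact hind.tendsto_nhds_iff.2 (tendsto_pi_nhds.2 h)

lemma IsCompact.exists_ultrafilter_tendsto_eval {C : Set (WeakSpace ℝ E)} (hC : IsCompact C)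
    {ι : Type*} (U : Ultrafilter ι) {f : ι → E} (hf : ∀ᶠ i in U, toWeakSpace ℝ E (f i) ∈ C) :
    ∃ x, toWeakSpace ℝ E x ∈ C ∧
      ∀ φ : StrongDual ℝ E, Tendsto (fun i => φ (f i)) U (nhds (φ x)) := by
  obtain ⟨x, hx, hle⟩ := isCompact_iff_ultrafilter_le_nhds.1 hC
    (U.map fun i => toWeakSpace ℝ E (f i)) (le_principal_iff.2 hf)
  obtain ⟨x, rfl⟩ := (toWeakSpace ℝ E).surjective x
  exact ⟨x, hx, tendsto_toWeakSpace_iff.1 hle⟩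

lemma isWeaklyCompact_of_ultrafilter {W : Set E}
    (h : ∀ U : Ultrafilter E, W ∈ U → ∃ x ∈ W,
      ∀ φ : StrongDual ℝ E, Tendsto (fun y => φ y) U (nhds (φ x))) :
    IsWeaklyCompact W := by
  refine isCompact_iff_ultrafilter_le_nhds.2 fun V hV => ?_
  have hW : W ∈ V.map (toWeakSpace ℝ E).symm := by
    refine Ultrafilter.mem_map.2 (mem_of_superset (le_principal_iff.1 hV) ?_)
    rintro _ ⟨x, hx, rfl⟩
    simpa using hx
  obtain ⟨x, hx, hlim⟩ := h _ hW
  refine ⟨_, mem_image_of_mem _ hx, ?_⟩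
  have := tendsto_toWeakSpace_iff (f := fun y : E => y).2 hlim
  simpa [Tendsto, Filter.map_map, Function.comp_def] using this

lemma IsWeaklyCompact.isClosed {W : Set E} (hW : IsWeaklyCompact W) : IsClosed W := by
  have : W = toWeakSpaceCLM ℝ E ⁻¹' (toWeakSpace ℝ E '' W) := by
    ext x
    simp
  rw [this]
  exact (IsCompact.isClosed hW).preimage (toWeakSpaceCLM ℝ E).continuous

lemma IsRelWeaklyCompact.image {K : Set E} (hK : IsRelWeaklyCompact K) (T : E →L[ℝ] F) :
    IsRelWeaklyCompact (T '' K) := by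
  have hT : Continuous (WeakSpace.map T) := (WeakSpace.map T).continuous
  refine (IsCompact.image hK hT).of_isClosed_subset isClosed_closure
    (closure_minimal ?_ (IsCompact.image hK hT).isClosed)
  rintro _ ⟨_, ⟨x, hx, rfl⟩, rfl⟩
  exact ⟨_, subset_closure (mem_image_of_mem _ hx), rfl⟩

lemma IsRelWeaklyCompact.exists_norm_le {K : Set E} (hK : IsRelWeaklyCompact K) :
    ∃ C : ℝ, ∀ x ∈ K, ‖x‖ ≤ C := by
  have key : ∃ C, ∀ x : K, ‖NormedSpace.inclusionInDoubleDualLi ℝ (x : E)‖ ≤ C := by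
    refine banach_steinhaus fun φ => ?_
    obtain ⟨C, hC⟩ := (IsCompact.image hK (continuous_eval_weakSpace φ)).isBounded.exists_norm_le
    exact ⟨C, fun x => hC _ ⟨_, subset_closure (mem_image_of_mem _ x.2), by simp; rfl⟩⟩
  obtain ⟨C, hC⟩ := key
  exact ⟨C, fun x hx =>
    ((NormedSpace.inclusionInDoubleDualLi ℝ).norm_map x).symm.trans_le (hC ⟨x, hx⟩)⟩

/-- A sum of functionals, chosen by a sequence of booleans. -/
def boolSum (ψ : ℕ → StrongDual ℝ E) (hψ : ∀ x, ∀ s : Finset ℕ, ∑ k ∈ s, ‖ψ k x‖ ≤ ‖x‖)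
    (σ : ℕ → Bool) : StrongDual ℝ E :=
  have hs' (x : E) : Summable fun k => (if σ k then ψ k x else 0) :=
    (summable_of_sum_le (fun _ => norm_nonneg _) (hψ x)).of_norm_bounded
      fun k => by split_ifs <;> simp
  LinearMap.mkContinuous
    { toFun := fun x => ∑' k, if σ k then ψ k x else 0
      map_add' := fun x y => by
        rw [← (hs' x).tsum_add (hs' y)]
        exact tsum_congr fun k => by split_ifs <;> simp
      map_smul' := fun c x => by
        rw [RingHom.id_apply, smul_eq_mul, ← tsum_mul_left]
        exact tsum_congr fun k => by split_ifs <;> simp } 1 fun x => by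
    rw [one_mul]
    refine tsum_of_norm_bounded (g := fun k => ‖ψ k x‖) (a := ∑' k, ‖ψ k x‖)
      (summable_of_sum_le (fun _ => norm_nonneg _) (hψ x)).hasSum
      (fun k => by split_ifs <;> simp) |>.trans ?_
    exact Real.tsum_le_of_sum_le (fun _ => norm_nonneg _) (hψ x)

lemma boolSum_apply (ψ : ℕ → StrongDual ℝ E)
    (hψ : ∀ x, ∀ s : Finset ℕ, ∑ k ∈ s, ‖ψ k x‖ ≤ ‖x‖) (σ : ℕ → Bool) (x : E) :
    boolSum ψ hψ σ x = ∑' k, if σ k then ψ k x else 0 := rfl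

lemma continuous_boolSum (ψ : ℕ → StrongDual ℝ E)
    (hψ : ∀ x, ∀ s : Finset ℕ, ∑ k ∈ s, ‖ψ k x‖ ≤ ‖x‖) (x : E) :
    Continuous fun σ => boolSum ψ hψ σ x := by
  simp only [boolSum_apply]
  refine continuous_tsum (u := fun k => ‖ψ k x‖) (fun k => ?_)
    (summable_of_sum_le (fun _ => norm_nonneg _) (hψ x))
    (fun k σ => by split_ifs <;> simp)
  exact (continuous_of_discreteTopology (f := fun b : Bool => if b then ψ k x else 0)).comp
    (continuous_apply k)

lemma boolSum_update_sub (ψ : ℕ → StrongDual ℝ E)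
    (hψ : ∀ x, ∀ s : Finset ℕ, ∑ k ∈ s, ‖ψ k x‖ ≤ ‖x‖) (σ : ℕ → Bool) (k : ℕ) (x : E) :
    boolSum ψ hψ (Function.update σ k true) x - boolSum ψ hψ (Function.update σ k false) x
      = ψ k x := by
  have hs' (σ : ℕ → Bool) : Summable fun k => (if σ k then ψ k x else 0) :=
    (summable_of_sum_le (fun _ => norm_nonneg _) (hψ x)).of_norm_bounded
      fun k => by split_ifs <;> simp
  rw [boolSum_apply, boolSum_apply, ← (hs' _).tsum_sub (hs' _), tsum_eq_single k]
  · simp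
  · intro j hj
    simp [Function.update_of_ne hj]

/-- A consequence of the Schur property of `ℓ¹`: an operator `x ↦ (ψ k x)ₖ` into `ℓ¹` maps a
weakly compact set to a set with uniformly small coordinates. -/
lemma IsCompact.exists_norm_apply_lt {C : Set (WeakSpace ℝ E)} (hC : IsCompact C)
    {f : ℕ → E} (hf : ∀ n, toWeakSpace ℝ E (f n) ∈ C) (ψ : ℕ → StrongDual ℝ E)
    (hψ : ∀ x, ∀ s : Finset ℕ, ∑ k ∈ s, ‖ψ k x‖ ≤ ‖x‖) {c : ℝ} (hc : 0 < c) :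
    ∃ k, ‖ψ k (f k)‖ < c := by
  have hcont : Continuous fun (x : WeakSpace ℝ E) k => ψ k ((toWeakSpace ℝ E).symm x) :=
    continuous_pi fun k => continuous_eval_weakSpace (ψ k)
  obtain ⟨_, ⟨x, hx, rfl⟩, u, hu, hlim⟩ :=
    (hC.image hcont).isSeqCompact fun n => mem_image_of_mem _ (hf n)
  obtain ⟨x, rfl⟩ := (toWeakSpace ℝ E).surjective x
  have hcoord (k : ℕ) : Tendsto (fun j => ψ k (f (u j))) atTop (nhds (ψ k x)) := by
    simpa using tendsto_pi_nhds.1 hlim k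
  have hbool (σ : ℕ → Bool) :
      Tendsto (fun j => boolSum ψ hψ σ (f (u j) - x)) atTop (nhds 0) := by
    refine (tendsto_iff_ultrafilter _ _ _).2 fun U hU => ?_
    obtain ⟨y, -, hy⟩ := hC.exists_ultrafilter_tendsto_eval U (f := fun j => f (u j))
      (Eventually.of_forall fun j => hf _)
    have hyx (k : ℕ) : ψ k y = ψ k x := tendsto_nhds_unique (hy (ψ k)) ((hcoord k).mono_left hU)
    have h := (hy (boolSum ψ hψ σ)).sub_const (boolSum ψ hψ σ x)
    simp only [map_sub]
    convert h using 2
    simp [boolSum_apply, hyx]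
  obtain ⟨N, σ, hσ⟩ : ∃ N, (interior {σ | ∀ j ≥ N,
      ‖boolSum ψ hψ σ (f (u j) - x)‖ ≤ c / 4}).Nonempty := by
    refine nonempty_interior_of_iUnion_of_closed (fun N => ?_) (eq_univ_of_forall fun σ => ?_)
    · simp only [ofPred_forall]
      exact isClosed_iInter fun j => isClosed_iInter fun _ =>
        isClosed_le (continuous_boolSum ψ hψ _).norm continuous_const
    · have := (hbool σ).norm.eventually_le_const (u := c / 4) (by simpa using by positivity)
      simpa [eventually_atTop] using this
  have hupd (b : Bool) : ∀ᶠ k in atTop, ∀ j ≥ N,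
      ‖boolSum ψ hψ (Function.update σ k b) (f (u j) - x)‖ ≤ c / 4 := by
    have : Tendsto (fun k => Function.update σ k b) atTop (nhds σ) := by
      refine tendsto_pi_nhds.2 fun i => tendsto_const_nhds.congr' ?_
      filter_upwards [eventually_gt_atTop i] with k hk
      rw [Function.update_of_ne hk.ne]
    filter_upwards [this.eventually (mem_interior_iff_mem_nhds.1 hσ)] with k hk using hk
  have hx0 : Tendsto (fun k => ‖ψ k x‖) atTop (nhds 0) :=
    (summable_of_sum_le (fun _ => norm_nonneg _) (hψ x)).tendsto_atTop_zero
  obtain ⟨j, ⟨⟨h₁, h₂⟩, h₃⟩, hj⟩ := ((hu.tendsto_atTop.eventually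
    (((hupd true).and (hupd false)).and (hx0.eventually_lt_const (half_pos hc)))).and
      (eventually_ge_atTop N)).exists
  refine ⟨u j, ?_⟩
  have h₄ : ‖ψ (u j) (f (u j) - x)‖ ≤ c / 4 + c / 4 := by
    rw [← boolSum_update_sub ψ hψ σ]
    exact (norm_sub_le _ _).trans (add_le_add (h₁ j hj) (h₂ j hj))
  calc ‖ψ (u j) (f (u j))‖ = ‖ψ (u j) (f (u j) - x) + ψ (u j) x‖ := by simp
    _ ≤ _ := norm_add_le _ _
    _ < c := by linarith

end WeakTopology

section UniformIntegrability

variable {E : Type*} [NormedAddCommGroup E]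

lemma lintegral_enorm_ne_top {μ : Measure Ω} (f : Lp E 1 μ) : ∫⁻ ω, ‖f ω‖ₑ ∂μ ≠ ∞ := by
  rw [← eLpNorm_one_eq_lintegral_enorm]
  exact Lp.eLpNorm_ne_top f

lemma norm_eq_toReal_lintegral {μ : Measure Ω} (f : Lp E 1 μ) :
    ‖f‖ = (∫⁻ ω, ‖f ω‖ₑ ∂μ).toReal := by
  rw [Lp.norm_def, eLpNorm_one_eq_lintegral_enorm]

/-- If functions in `K` carry mass `ε` on arbitrarily small sets, then some sequence in `K` carries
mass `ε / 2` on pairwise disjoint sets. -/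
lemma exists_seq_pairwise_disjoint {μ : Measure Ω} {K : Set (Lp E 1 μ)} {ε : ℝ≥0∞} (hε : ε ≠ 0)
    (hε' : ε ≠ ∞)
    (h : ∀ δ : ℝ≥0∞, δ ≠ 0 → ∃ f ∈ K, ∃ A, MeasurableSet A ∧ μ A ≤ δ ∧
      ε < ∫⁻ ω in A, ‖f ω‖ₑ ∂μ) :
    ∃ (f : ℕ → Lp E 1 μ) (A : ℕ → Set Ω), (∀ n, f n ∈ K) ∧ (∀ n, MeasurableSet (A n)) ∧
      Pairwise (Function.onFun Disjoint A) ∧ ∀ n, ε / 2 ≤ ∫⁻ ω in A n, ‖f n ω‖ₑ ∂μ := by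
  choose! F hFK G hG hGμ hFG using h
  have hD (f : Lp E 1 μ) : ∃ d : ℝ≥0∞, d ≠ 0 ∧
      ∀ A, μ A ≤ d → ∫⁻ ω in A, ‖f ω‖ₑ ∂μ ≤ ε / 2 := by
    obtain ⟨δ, hδ, hA⟩ := exists_pos_setLIntegral_lt_of_measure_lt (lintegral_enorm_ne_top f)
      (ENNReal.half_pos hε).ne'
    obtain ⟨d, hd, hdδ⟩ := exists_between hδ
    exact ⟨d, hd.ne', fun A h => (hA A (h.trans_lt hdδ)).le⟩
  choose d hd0 hd using hD
  let η : ℕ → ℝ≥0∞ := fun n => Nat.rec 1 (fun _ e => min e (d (F e)) / 2) n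
  have hη_succ (n : ℕ) : η (n + 1) = min (η n) (d (F (η n))) / 2 := rfl
  have hη0 (n : ℕ) : η n ≠ 0 := by
    induction n with
    | zero => exact one_ne_zero
    | succ n ih =>
      rw [hη_succ]
      exact (ENNReal.half_pos (lt_min ih.bot_lt (hd0 _).bot_lt).ne').ne'
  have hη_le (k i : ℕ) : η (k + 1 + i) ≤ d (F (η k)) * 2⁻¹ ^ (i + 1) := by
    induction i with
    | zero =>
      rw [add_zero, hη_succ, zero_add, pow_one, div_eq_mul_inv]
      gcongr
      exact min_le_right _ _
    | succ i ih =>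
      rw [← add_assoc, hη_succ, pow_succ, ← mul_assoc, div_eq_mul_inv]
      gcongr
      exact (min_le_left _ _).trans ih
  have hμ (k : ℕ) : μ (⋃ i, G (η (k + 1 + i))) ≤ d (F (η k)) :=
    calc μ (⋃ i, G (η (k + 1 + i))) ≤ ∑' i, μ (G (η (k + 1 + i))) := measure_iUnion_le _
      _ ≤ ∑' i, d (F (η k)) * 2⁻¹ ^ (i + 1) :=
        ENNReal.tsum_le_tsum fun i => (hGμ _ (hη0 _)).trans (hη_le k i)
      _ = d (F (η k)) := by
        rw [ENNReal.tsum_mul_left, ENNReal.tsum_geometric_add_one, ENNReal.one_sub_inv_two,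
          inv_inv, ENNReal.inv_mul_cancel two_ne_zero ofNat_ne_top, mul_one]
  refine ⟨fun k => F (η k), fun k => G (η k) \ ⋃ i, G (η (k + 1 + i)), fun k => hFK _ (hη0 k),
    fun k => (hG _ (hη0 k)).diff (.iUnion fun i => hG _ (hη0 _)), ?_, fun k => ?_⟩
  · refine (pairwise_disjoint_on _).2 fun k j hkj => ?_
    obtain ⟨i, rfl⟩ := Nat.exists_eq_add_of_le (Nat.succ_le_of_lt hkj)
    exact disjoint_sdiff_left.mono_right (sdiff_subset.trans
      (subset_iUnion (fun i => G (η (k + 1 + i))) i))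
  · have h₁ := hFG _ (hη0 k)
    have h₂ : ∫⁻ ω in G (η k), ‖F (η k) ω‖ₑ ∂μ ≤
        (∫⁻ ω in G (η k) \ ⋃ i, G (η (k + 1 + i)), ‖F (η k) ω‖ₑ ∂μ) + ε / 2 :=
      calc _ ≤ ∫⁻ ω in (G (η k) \ ⋃ i, G (η (k + 1 + i))) ∪ ⋃ i, G (η (k + 1 + i)),
            ‖F (η k) ω‖ₑ ∂μ := lintegral_mono_set (by rw [sdiff_union_self]; exact subset_union_left)
        _ ≤ _ := (lintegral_union_le _ _ _).trans (by gcongr; exact hd _ _ (hμ k))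
    have h₃ := h₁.le.trans h₂
    refine (ENNReal.add_le_add_iff_right (ENNReal.half_lt_self hε hε').ne_top).1 ?_
    rwa [ENNReal.add_halves]

variable [NormedSpace ℝ E]

lemma IsRelWeaklyCompact.exists_setLIntegral_le {μ : Measure Ω} {K : Set (Lp E 1 μ)}
    (hK : IsRelWeaklyCompact K) {ε : ℝ≥0∞} (hε : ε ≠ 0) (hε' : ε ≠ ∞) :
    ∃ δ : ℝ≥0∞, δ ≠ 0 ∧ ∀ f ∈ K, ∀ A, MeasurableSet A → μ A ≤ δ →
      ∫⁻ ω in A, ‖f ω‖ₑ ∂μ ≤ ε := by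
  by_contra! h
  obtain ⟨f, A, hfK, hA, hdisj, hle⟩ := exists_seq_pairwise_disjoint hε hε' h
  let R (k : ℕ) := LpToLpRestrictCLM Ω E ℝ μ 1 (A k)
  have hR (k : ℕ) (g : Lp E 1 μ) : ‖R k g‖ = (∫⁻ ω in A k, ‖g ω‖ₑ ∂μ).toReal := by
    rw [norm_eq_toReal_lintegral]
    congr 1
    refine lintegral_congr_ae ?_
    filter_upwards [LpToLpRestrictCLM_coeFn ℝ (A k) g] with ω hω
    rw [hω]
  choose g hg hgf using fun k => exists_dual_vector'' ℝ (R k (f k))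
  have hfin (k : ℕ) (x : Lp E 1 μ) : ∫⁻ ω in A k, ‖x ω‖ₑ ∂μ ≠ ∞ :=
    ne_top_of_le_ne_top (lintegral_enorm_ne_top x) (setLIntegral_le_lintegral _ _)
  have hc : 0 < (ε / 2).toReal :=
    ENNReal.toReal_pos (ENNReal.half_pos hε).ne' (ENNReal.half_lt_self hε hε').ne_top
  have hsum (x : Lp E 1 μ) (s : Finset ℕ) : ∑ k ∈ s, ‖((g k).comp (R k)) x‖ ≤ ‖x‖ :=
    calc ∑ k ∈ s, ‖((g k).comp (R k)) x‖ ≤ ∑ k ∈ s, (∫⁻ ω in A k, ‖x ω‖ₑ ∂μ).toReal := by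
          refine Finset.sum_le_sum fun k _ => ?_
          rw [← hR]
          exact ((g k).le_of_opNorm_le (hg k) _).trans (one_mul _).le
      _ = (∫⁻ ω in ⋃ k ∈ s, A k, ‖x ω‖ₑ ∂μ).toReal := by
          rw [lintegral_biUnion_finset (fun i _ j _ hij => hdisj hij) fun k _ => hA k,
            ENNReal.toReal_sum fun k _ => hfin k x]
      _ ≤ ‖x‖ := by
          rw [norm_eq_toReal_lintegral]
          exact ENNReal.toReal_mono (lintegral_enorm_ne_top x) (setLIntegral_le_lintegral _ _)
  obtain ⟨k, hk⟩ := IsCompact.exists_norm_apply_lt hK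
    (fun n => subset_closure (mem_image_of_mem _ (hfK n))) (fun k => (g k).comp (R k)) hsum hc
  refine hk.not_ge ?_
  rw [ContinuousLinearMap.comp_apply, hgf, hR]
  simpa using ENNReal.toReal_mono (hfin k _) (hle k)

/-- Relatively weakly compact subsets of `L¹(μ,E)` are uniformly integrable. -/
lemma IsRelWeaklyCompact.unifIntegrableSet {μ : Measure Ω} [IsFiniteMeasure μ]
    {K : Set (Lp E 1 μ)} (hK : IsRelWeaklyCompact K) : UnifIntegrableSet μ K := by
  refine ⟨hK.exists_norm_le, fun ε hε => ?_⟩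
  obtain ⟨δ, hδ, h⟩ := hK.exists_setLIntegral_le (ENNReal.ofReal_pos.2 hε).ne' ofReal_ne_top
  refine ⟨(min δ 1).toReal, ENNReal.toReal_pos (lt_min hδ.bot_lt one_pos).ne'
    (by simp), fun f hf A hA => ?_⟩
  rw [ENNReal.ofReal_toReal (by simp)] at hA
  rw [← Measure.restrict_toMeasurable (measure_ne_top μ A),
    integral_norm_eq_lintegral_enorm (Lp.aestronglyMeasurable f).restrict]
  refine ENNReal.toReal_le_of_le_ofReal hε.le (h f hf _ (measurableSet_toMeasurable _ _) ?_)
  rw [measure_toMeasurable]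
  exact hA.trans (min_le_left _ _)

end UniformIntegrability

section LpSum

variable {E : ℕ → Type*} [∀ n, NormedAddCommGroup (E n)] {r : ℝ≥0∞}

lemma lp.sum_single_apply (x : ∀ n, E n) (s : Finset ℕ) (j : ℕ) :
    (∑ i ∈ s, lp.single r i (x i)) j = if j ∈ s then x j else 0 := by
  rw [lp.coeFn_sum, Finset.sum_apply]
  split_ifs with hj
  · rw [Finset.sum_eq_single_of_mem j hj fun i _ hij => lp.single_apply_ne r i _ hij.symm,
      lp.single_apply_self]
  · exact Finset.sum_eq_zero fun i hi =>
      lp.single_apply_ne r i _ fun h => hj (h ▸ hi)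

lemma lp.norm_sum_single_le (hr : 0 < r.toReal) (x : lp E r) (s : Finset ℕ) :
    ‖∑ i ∈ s, lp.single r i (x i)‖ ≤ ‖x‖ := by
  rw [← Real.rpow_le_rpow_iff (lp.norm_nonneg' _) (lp.norm_nonneg' _) hr,
    lp.norm_sum_single hr]
  exact lp.sum_rpow_le_norm_rpow hr x s

lemma lp.norm_add_le_of_disjoint (hr : 0 < r.toReal) {x y : lp E r} (hx : ‖x‖ ≤ 1)
    (hy : ‖y‖ ≤ 1) (hxy : ∀ i, x i = 0 ∨ y i = 0) : ‖x + y‖ ≤ 2 ^ (1 / r.toReal) := by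
  have hpow {z : lp E r} (hz : ‖z‖ ≤ 1) (s : Finset ℕ) : ∑ i ∈ s, ‖z i‖ ^ r.toReal ≤ 1 :=
    (lp.sum_rpow_le_norm_rpow hr z s).trans (Real.rpow_le_one (lp.norm_nonneg' _) hz hr.le)
  refine lp.norm_le_of_forall_sum_le hr (by positivity) fun s => ?_
  rw [← Real.rpow_mul two_pos.le, one_div_mul_cancel hr.ne', Real.rpow_one]
  calc ∑ i ∈ s, ‖(x + y : lp E r) i‖ ^ r.toReal
      ≤ ∑ i ∈ s, (‖x i‖ ^ r.toReal + ‖y i‖ ^ r.toReal) := by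
        refine Finset.sum_le_sum fun i _ => ?_
        rw [lp.coeFn_add, Pi.add_apply]
        rcases hxy i with h | h <;> simp [h, Real.zero_rpow hr.ne']
    _ ≤ 2 := by
        rw [Finset.sum_add_distrib]
        linarith [hpow hx s, hpow hy s]

variable [∀ n, NormedSpace ℝ (E n)] [Fact (1 ≤ r)]

/-- For `1 < r < ∞`, functionals on `ℓʳ(Eₙ)` are small on vectors supported far away. -/
lemma lp.exists_abs_apply_le_of_tail (hr1 : 1 < r) (hr2 : r < ∞) (φ : StrongDual ℝ (lp E r))
    {ε : ℝ} (hε : 0 < ε) :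
    ∃ N, ∀ x : lp E r, (∀ i < N, x i = 0) → |φ x| ≤ ε * ‖x‖ := by
  have hp1 : 1 < r.toReal := by
    simpa using (ENNReal.toReal_lt_toReal one_ne_top hr2.ne).2 hr1
  have hp : 0 < r.toReal := one_pos.trans hp1
  set c : ℝ := 2 ^ (1 / r.toReal)
  have hc0 : 0 < c := by positivity
  have hc2 : c < 2 := by
    exact (Real.rpow_lt_rpow_of_exponent_lt one_lt_two ((div_lt_one hp).2 hp1)).trans_eq
      (Real.rpow_one 2)
  let S (N : ℕ) : Set (lp E r) := {x | ‖x‖ ≤ 1 ∧ ∀ i < N, x i = 0}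
  have hS0 (N : ℕ) : (0 : lp E r) ∈ S N := ⟨by simp, fun i _ => rfl⟩
  let a (N : ℕ) : ℝ := sSup (φ '' S N)
  have hbdd (N : ℕ) : BddAbove (φ '' S N) := by
    refine ⟨‖φ‖, ?_⟩
    rintro _ ⟨x, hx, rfl⟩
    exact (le_abs_self _).trans (φ.unit_le_opNorm x hx.1)
  have hle {N : ℕ} {x : lp E r} (hx : x ∈ S N) : φ x ≤ a N :=
    le_csSup (hbdd N) (mem_image_of_mem _ hx)
  have ha0 (N : ℕ) : 0 ≤ a N := by simpa using hle (hS0 N)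
  have hbelow : BddBelow (range a) := ⟨0, by rintro _ ⟨N, rfl⟩; exact ha0 N⟩
  set L := ⨅ N, a N
  have hstep (N : ℕ) : a N + L ≤ c * a N := by
    rw [← le_sub_iff_add_le]
    refine csSup_le (Set.Nonempty.image _ ⟨0, hS0 N⟩) ?_
    rintro _ ⟨u, hu, rfl⟩
    rw [le_sub_iff_add_le]
    refine le_of_forall_pos_le_add fun η hη => ?_
    have hlim : Tendsto (fun M => φ (∑ i ∈ Finset.range M, lp.single r i (u i))) atTop
        (nhds (φ u)) :=
      (φ.continuous.tendsto _).comp (lp.hasSum_single hr2.ne u).tendsto_sum_nat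
    obtain ⟨M, hM⟩ := (hlim.eventually_const_lt (sub_lt_self (φ u) (half_pos hη))).exists
    obtain ⟨_, ⟨v, hv, rfl⟩, hv'⟩ := exists_lt_of_lt_csSup
      (Set.Nonempty.image φ ⟨0, hS0 (max M N)⟩) (sub_lt_self (a (max M N)) (half_pos hη))
    have hLa : L ≤ a (max M N) := ciInf_le hbelow _
    set u' := ∑ i ∈ Finset.range M, lp.single r i (u i) with hu'
    have hnorm : ‖u' + v‖ ≤ c := by
      refine lp.norm_add_le_of_disjoint hp ((lp.norm_sum_single_le hp u _).trans hu.1) hv.1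
        fun i => ?_
      rcases lt_or_ge i M with hi | hi
      · exact .inr (hv.2 i (hi.trans_le (le_max_left _ _)))
      · left
        rw [hu', lp.sum_single_apply, if_neg (by simpa using hi)]
    have hmem : c⁻¹ • (u' + v) ∈ S N := by
      refine ⟨?_, fun i hi => ?_⟩
      · rw [norm_smul, norm_inv, Real.norm_of_nonneg hc0.le]
        exact inv_mul_le_one_of_le₀ hnorm hc0.le
      · rw [lp.coeFn_smul, Pi.smul_apply, lp.coeFn_add, Pi.add_apply,
          hv.2 i (hi.trans_le (le_max_right _ _)), hu', lp.sum_single_apply, hu.2 i hi]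
        simp
    have h := hle hmem
    rw [map_smul, smul_eq_mul, inv_mul_le_iff₀ hc0, map_add] at h
    linarith
  have hLε : L < ε := by
    have hL0 : 0 ≤ L := le_ciInf ha0
    by_contra! hεL
    have hc1 : 0 < c - 1 := by
      by_contra! h
      nlinarith [hstep 0, ha0 0]
    have : L / (c - 1) ≤ L := le_ciInf fun N => by
      rw [div_le_iff₀ hc1]
      linarith [hstep N]
    rw [div_le_iff₀ hc1] at this
    nlinarith
  obtain ⟨N, hN⟩ := exists_lt_of_ciInf_lt hLε
  have key (x : lp E r) (hx : ∀ i < N, x i = 0) : φ x ≤ ε * ‖x‖ := by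
    rcases eq_or_ne x 0 with rfl | hx0
    · simp
    have hpos : 0 < ‖x‖ := norm_pos_iff.2 hx0
    have hmem : ‖x‖⁻¹ • x ∈ S N := by
      refine ⟨?_, fun i hi => ?_⟩
      · rw [norm_smul, norm_inv, norm_norm, inv_mul_cancel₀ hpos.ne']
      · rw [lp.coeFn_smul, Pi.smul_apply, hx i hi, smul_zero]
    have h := (hle hmem).trans hN.le
    rw [map_smul, smul_eq_mul, inv_mul_le_iff₀ hpos] at h
    linarith
  refine ⟨N, fun x hx => abs_le'.2 ⟨key x hx, ?_⟩⟩
  have h := key (-x) fun i hi => by rw [lp.coeFn_neg, Pi.neg_apply, hx i hi, neg_zero]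
  rwa [map_neg, norm_neg] at h

lemma isWeaklyCompact_lp (hr1 : 1 < r) (hr2 : r < ∞) {W : ∀ n, Set (E n)}
    (hW : ∀ n, IsWeaklyCompact (W n)) {C : ℝ} (hC : 0 ≤ C) :
    IsWeaklyCompact {x : lp E r | (∀ n, x n ∈ W n) ∧ ‖x‖ ≤ C} := by
  have hp : 0 < r.toReal := ENNReal.toReal_pos (one_pos.trans hr1).ne' hr2.ne
  refine isWeaklyCompact_of_ultrafilter fun U hU => ?_
  have hcoord (n : ℕ) : ∃ w ∈ W n, ∀ φ : StrongDual ℝ (E n),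
      Tendsto (fun y : lp E r => φ (y n)) U (nhds (φ w)) := by
    obtain ⟨w, ⟨w', hw', h⟩, hlim⟩ := IsCompact.exists_ultrafilter_tendsto_eval (hW n) U
      (f := fun y : lp E r => y n) (mem_of_superset hU fun y hy => mem_image_of_mem _ (hy.1 n))
    obtain rfl := (toWeakSpace ℝ (E n)).injective h
    exact ⟨w', hw', hlim⟩
  choose w hwW hw using hcoord
  have hsum (s : Finset ℕ) : ∑ i ∈ s, ‖w i‖ ^ r.toReal ≤ C ^ r.toReal := by
    choose g hg hgw using fun i => exists_dual_vector'' ℝ (w i)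
    have hlim : Tendsto (fun y : lp E r => ∑ i ∈ s, |g i (y i)| ^ r.toReal) U
        (nhds (∑ i ∈ s, ‖w i‖ ^ r.toReal)) := by
      refine tendsto_finsetSum _ fun i _ => ?_
      have h := ((hw i (g i)).abs).rpow_const (p := r.toReal) (.inr hp.le)
      simpa [hgw] using h
    refine le_of_tendsto hlim (mem_of_superset hU fun y hy => ?_)
    calc ∑ i ∈ s, |g i (y i)| ^ r.toReal ≤ ∑ i ∈ s, ‖y i‖ ^ r.toReal := by
          gcongr with i
          exact ((g i).le_of_opNorm_le (hg i) _).trans (one_mul _).le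
      _ ≤ ‖y‖ ^ r.toReal := lp.sum_rpow_le_norm_rpow hp y s
      _ ≤ C ^ r.toReal := Real.rpow_le_rpow (norm_nonneg _) hy.2 hp.le
  let x : lp E r := ⟨w, memℓp_gen' hsum⟩
  have hxC : ‖x‖ ≤ C := lp.norm_le_of_forall_sum_le hp hC hsum
  refine ⟨x, ⟨hwW, hxC⟩, fun φ => Metric.tendsto_nhds.2 fun ε hε => ?_⟩
  have hε' : 0 < ε / (4 * (C + 1)) := by positivity
  obtain ⟨N, hN⟩ := lp.exists_abs_apply_le_of_tail hr1 hr2 φ hε'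
  let P (y : lp E r) : lp E r := ∑ i ∈ Finset.range N, lp.single r i (y i)
  have htail {y : lp E r} (hy : ‖y‖ ≤ C) : |φ (y - P y)| ≤ ε / 4 := by
    have hnorm : ‖y - P y‖ ≤ ‖y‖ := by
      rw [← Real.rpow_le_rpow_iff (norm_nonneg _) (norm_nonneg _) hp,
        lp.norm_compl_sum_single hp]
      exact sub_le_self _ (Finset.sum_nonneg fun i _ => by positivity)
    calc |φ (y - P y)| ≤ ε / (4 * (C + 1)) * ‖y - P y‖ := hN _ fun i hi => by
          rw [lp.coeFn_sub, Pi.sub_apply, lp.sum_single_apply, if_pos (Finset.mem_range.2 hi),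
            sub_self]
      _ ≤ ε / (4 * (C + 1)) * (C + 1) := by gcongr; linarith
      _ = ε / 4 := by field_simp
  have hP : Tendsto (fun y => φ (P y)) U (nhds (φ (P x))) := by
    simp only [P, map_sum]
    exact tendsto_finsetSum _ fun i _ =>
      hw i (φ.comp (lp.singleContinuousLinearMap ℝ E r i))
  filter_upwards [Metric.tendsto_nhds.1 hP (ε / 2) (half_pos hε), hU] with y hy hyW
  rw [Real.dist_eq] at hy ⊢
  have h₁ := abs_le.1 (htail hyW.2)
  have h₂ := abs_le.1 (htail hxC)
  have h₃ := abs_lt.1 hy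
  rw [map_sub] at h₁ h₂
  rw [abs_lt]
  constructor <;> linarith

end LpSum

lemma measure_le_norm_le {E : Type*} [NormedAddCommGroup E] {μ : Measure Ω} (f : Lp E 1 μ)
    {C : ℝ} (hC : 0 < C) (hf : ‖f‖ ≤ C) {δ : ℝ} (hδ : 0 < δ) :
    μ {ω | C / δ ≤ ‖f ω‖} ≤ ENNReal.ofReal δ := by
  have h := mul_meas_ge_le_lintegral₀ (Lp.aestronglyMeasurable f).enorm (ENNReal.ofReal (C / δ))
  have hset : {ω | ENNReal.ofReal (C / δ) ≤ ‖f ω‖ₑ} = {ω | C / δ ≤ ‖f ω‖} := by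
    ext ω
    rw [mem_ofPred_eq, mem_ofPred_eq, ← ofReal_norm, ENNReal.ofReal_le_ofReal_iff (norm_nonneg _)]
  have hint : ∫⁻ ω, ‖f ω‖ₑ ∂μ ≤ ENNReal.ofReal (C / δ) * ENNReal.ofReal δ := by
    rw [← ENNReal.ofReal_mul (by positivity), div_mul_cancel₀ _ hδ.ne']
    refine (ENNReal.le_ofReal_iff_toReal_le (lintegral_enorm_ne_top f) hC.le).2 ?_
    rwa [← norm_eq_toReal_lintegral]
  rw [hset] at h
  exact (ENNReal.mul_le_mul_iff_right (ENNReal.ofReal_pos.2 (by positivity)).ne'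
    ofReal_ne_top).1 (h.trans hint)

lemma measure_notMem_le {E : Type*} [NormedAddCommGroup E] {μ : Measure Ω}
    [IsProbabilityMeasure μ] (f : Lp E 1 μ) {W : Set E} (hW : IsClosed W) {δ : ℝ≥0∞}
    (hf : 1 - δ ≤ μ (f ⁻¹' W)) : μ {ω | f ω ∉ W} ≤ δ := by
  borelize E
  have hmeas : MeasurableSet (f ⁻¹' W) :=
    (Lp.stronglyMeasurable f).measurable hW.measurableSet
  calc μ {ω | f ω ∉ W} = 1 - μ (f ⁻¹' W) := prob_compl_eq_one_sub hmeas
    _ ≤ δ := by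
      rw [tsub_le_iff_left]
      exact tsub_le_iff_right.1 hf

/-- If each `Xₙ` has property (δSμ) and `1 < r < ∞`, then the `ℓʳ`-sum `ℓʳ(Xₙ)` has
property (δSμ). -/
theorem deltaSProp_lp_sum (μ : Measure Ω) [IsProbabilityMeasure μ]
    (X : ℕ → Type*) [∀ n, NormedAddCommGroup (X n)] [∀ n, NormedSpace ℝ (X n)]
    [∀ n, CompleteSpace (X n)] (r : ℝ≥0∞) [Fact (1 ≤ r)] (hr1 : 1 < r) (hr2 : r < ∞)
    (h : ∀ n, DeltaSProp μ (X n)) :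
    DeltaSProp μ (lp X r) := by
  intro K hK
  refine ⟨hK.unifIntegrableSet, fun δ hδ => ?_⟩
  obtain ⟨δ', hδ', hsum⟩ := ENNReal.exists_pos_sum_of_countable
    (ENNReal.ofReal_pos.2 (half_pos hδ)).ne' ℕ
  let T (n : ℕ) : Lp (lp X r) 1 μ →L[ℝ] Lp (X n) 1 μ := (lp.evalCLM ℝ X r n).compLpL 1 μ
  choose W hW hWK using fun n => (h n _ (hK.image (T n))).2 (δ' n) (hδ' n)
  obtain ⟨C, hC⟩ := hK.exists_norm_le
  have hC1 : 0 < max C 1 := one_pos.trans_le (le_max_right _ _)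
  refine ⟨_, isWeaklyCompact_lp hr1 hr2 hW (C := max C 1 / (δ / 2)) (by positivity),
    fun f hf => ?_⟩
  set V := {x : lp X r | (∀ n, x n ∈ W n) ∧ ‖x‖ ≤ max C 1 / (δ / 2)}
  have hcoord (n : ℕ) : μ {ω | f ω n ∉ W n} ≤ δ' n := by
    have hae : ∀ᵐ ω ∂μ, T n f ω = f ω n := (lp.evalCLM ℝ X r n).coeFn_compLpL f
    have hle : {ω | f ω n ∉ W n} ≤ᵐ[μ] {ω | T n f ω ∉ W n} := by
      filter_upwards [hae] with ω hω hmem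
      exact fun hT => hmem (hω ▸ hT)
    refine (measure_mono_ae hle).trans (measure_notMem_le _ (hW n).isClosed ?_)
    simpa using hWK n _ (mem_image_of_mem _ hf)
  have hsub : (f ⁻¹' V)ᶜ ⊆ (⋃ n, {ω | f ω n ∉ W n}) ∪ {ω | max C 1 / (δ / 2) ≤ ‖f ω‖} := by
    intro ω hω
    by_contra hcon
    simp only [mem_union, mem_iUnion, mem_ofPred_eq, not_or, not_exists, not_not, not_le] at hcon
    exact hω ⟨hcon.1, hcon.2.le⟩
  have hcompl : μ (f ⁻¹' V)ᶜ ≤ ENNReal.ofReal δ :=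
    calc μ (f ⁻¹' V)ᶜ
        ≤ ∑' n, μ {ω | f ω n ∉ W n} + μ {ω | max C 1 / (δ / 2) ≤ ‖f ω‖} :=
          (measure_mono hsub).trans ((measure_union_le _ _).trans
            (by gcongr; exact measure_iUnion_le _))
      _ ≤ ENNReal.ofReal (δ / 2) + ENNReal.ofReal (δ / 2) :=
          add_le_add ((ENNReal.tsum_le_tsum hcoord).trans hsum.le)
            (measure_le_norm_le f hC1 ((hC f hf).trans (le_max_left _ _)) (half_pos hδ))
      _ = ENNReal.ofReal δ := by
          rw [← ENNReal.ofReal_add (half_pos hδ).le (half_pos hδ).le, add_halves]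
  rw [tsub_le_iff_right]
  calc 1 = μ (f ⁻¹' V ∪ (f ⁻¹' V)ᶜ) := by rw [union_compl_self, measure_univ]
    _ ≤ μ (f ⁻¹' V) + ENNReal.ofReal δ := (measure_union_le _ _).trans (by gcongr)
end
end
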